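/- With the notation below, assuming every Dirichlet L-function modulo q satisfies the Riemann Hypothesis, there is a constant C depending only on k, A and the a_j such that ∑_{χ ∈ 𝒯} exp(2·[Re ∑_{p ≤ q^{β_𝓘}} (χ(p)h(p)/p^{1/2 + 1/(β_𝓘 log q)})·(log(q^{β_𝓘}/p)/log(q^{β_𝓘})) + (1/2)·Re ∑_{p ≤ q^{β_𝓘/2}} χ(p²)h(p²)/p]) ≤ C · φ(q) · (log q)^{(a_1²+⋯+a_{2k}²)/4} · ∏_{1≤i<j≤2k} g(|t_i − t_j|)^{a_i a_j/2}. -/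

import Mathlib

open Complex Real Finset

def dirichletRH {q : ℕ} [NeZero q] (χ : DirichletCharacter ℂ q) : Prop :=
  ∀ s : ℂ, 0 < s.re → s.re < 1 → DirichletCharacter.LFunction χ s = 0 → s.re = 1 / 2

noncomputable def gfun (q : ℕ) (x : ℝ) : ℝ :=
  if x ≤ 1 / Real.log q ∨ Real.exp q ≤ x then Real.log q
  else if x ≤ 10 then 1 / x
  else Real.log (Real.log x)

/-- `β_0 = 0` and `β_i = 20^{i-1}/(log log q)²` for `i ≥ 1`. -/
noncomputable def betaSeq (q : ℕ) (i : ℕ) : ℝ :=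
  if i = 0 then 0 else 20 ^ (i - 1) / (Real.log (Real.log q)) ^ 2

/-- `𝓘 = 1 + max {i : β_i ≤ e^{-10000 a² (A+1)}}`. -/
noncomputable def bigI (q : ℕ) (a A : ℝ) : ℕ :=
  1 + sSup {i : ℕ | betaSeq q i ≤ Real.exp (-(10000 * a ^ 2 * (A + 1)))}

/-- `G_{(i,l)}(χ) = ∑_{q^{β_{i-1}} < p ≤ q^{β_i}} χ(p)h(p)/p^{1/2+1/(β_l log q)}
    · log(q^{β_l}/p)/log(q^{β_l})`, the sum running over primes. -/
noncomputable def Gfun (q : ℕ) (h : ℕ → ℂ) (i l : ℕ) (χ : DirichletCharacter ℂ q) : ℂ :=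
  ∑ p ∈ Finset.filter (fun p : ℕ => p.Prime ∧ (q : ℝ) ^ betaSeq q (i - 1) < (p : ℝ))
      (Finset.Iic ⌊(q : ℝ) ^ betaSeq q i⌋₊),
    χ p * h p / (p : ℂ) ^ (((1 / 2 + 1 / (betaSeq q l * Real.log q) : ℝ) : ℂ)) *
      ((Real.log ((q : ℝ) ^ betaSeq q l / p) / Real.log ((q : ℝ) ^ betaSeq q l) : ℝ) : ℂ)

/-!
The Riemann Hypothesis for the principal character is that for `ζ`, and either it holds or there is
nothing to prove. It gives `ζ'/ζ ≪ log log` near `Re s = 1`, by interpolation from the bound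
`ζ'/ζ ≪ log` to the left of that line, hence `ζ(1 + δ + it) ≪ g(|t|)` for `δ ≥ 1 / log q`.

For `χ ∈ 𝒯` the sum over each block of primes is small, so its exponential is at most a constant
times the square of a Taylor polynomial, and these constants have a bounded product. The resulting
product over the blocks is a Dirichlet polynomial of length less than `q`, so orthogonality of the
characters bounds its mean by the mean for a random completely multiplicative function. Taking the
values of the latter at primes to be independent 5-th roots of unity `X` keeps the model finite,
while `1`, `X`, `X²` and their conjugates are still uncorrelated. By independence the mean is
`≪ exp(∑ |h(p)|² p ^ (-1 - δ))` with `δ = 2 / (β_𝓘 log q)`. Expanding the square leaves values of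
the prime zeta function at `1 + δ + i(t_j - t_l)`, that is, values of `log |ζ|` up to `O(1)`.
-/

lemma summable_natCast_add_one_rpow {r : ℝ} (hr : r < -1) :
    Summable fun n : ℕ ↦ ((n : ℝ) + 1) ^ r := by
  simpa using (summable_nat_add_iff 1).2 (Real.summable_nat_rpow.2 hr)

lemma hasDerivAt_ofReal_cpow_const_of_pos (r : ℂ) {x : ℝ} (hx : 0 < x) :
    HasDerivAt (fun y : ℝ ↦ (y : ℂ) ^ r) (r * (x : ℂ) ^ (r - 1)) x := by
  simpa using ((hasDerivAt_id (x : ℂ)).cpow_const (c := r) (Or.inl (by simpa using hx))).comp_ofReal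

lemma norm_cpow_neg_sub_le {s : ℂ} (hs : 0 ≤ s.re) {x y : ℝ} (hx : 0 < x) (hxy : x ≤ y) :
    ‖(y : ℂ) ^ (-s) - (x : ℂ) ^ (-s)‖ ≤ ‖s‖ * x ^ (-s.re - 1) * (y - x) := by
  rw [← Real.norm_of_nonneg (sub_nonneg.2 hxy)]
  refine (convex_Icc x y).norm_image_sub_le_of_norm_hasDerivWithin_le
    (fun z hz ↦ (hasDerivAt_ofReal_cpow_const_of_pos (-s) (hx.trans_le hz.1)).hasDerivWithinAt)
    (fun z hz ↦ ?_) (Set.left_mem_Icc.2 hxy) (Set.right_mem_Icc.2 hxy)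
  rw [norm_mul, norm_neg, Complex.norm_cpow_eq_rpow_re_of_pos (hx.trans_le hz.1)]
  gcongr ‖s‖ * ?_
  simpa using Real.rpow_le_rpow_of_nonpos hx hz.1 (by linarith : -s.re - 1 ≤ 0)

/-- `(s - 1) * ((n + 1) ^ (-s) - ∫ x in (n + 1)..(n + 2), x ^ (-s))`: summing over `n` compares
`(s - 1) * ζ s` with `(s - 1) * ∫ x in 1..∞, x ^ (-s) = 1` interval by interval. -/
noncomputable def zetaIntegralDefect (n : ℕ) (s : ℂ) : ℂ :=
  (s - 1) * ((n + 1 : ℕ) : ℂ) ^ (-s) + ((n + 2 : ℕ) : ℂ) ^ (1 - s) - ((n + 1 : ℕ) : ℂ) ^ (1 - s)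

lemma norm_zetaIntegralDefect_le {s : ℂ} (hs : 0 ≤ s.re) (n : ℕ) :
    ‖zetaIntegralDefect n s‖ ≤ ‖s‖ * ‖s - 1‖ * ((n : ℝ) + 1) ^ (-s.re - 1) := by
  have hn : (0 : ℝ) < (n : ℝ) + 1 := by positivity
  have key := (convex_Icc ((n : ℝ) + 1) (n + 2)).norm_image_sub_le_of_norm_hasDerivWithin_le
    (f := fun y : ℝ ↦ (y : ℂ) ^ (1 - s) - (1 - s) * (((n : ℝ) + 1 : ℝ) : ℂ) ^ (-s) * (y : ℂ))
    (f' := fun y : ℝ ↦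
      (1 - s) * (y : ℂ) ^ (1 - s - 1) - (1 - s) * (((n : ℝ) + 1 : ℝ) : ℂ) ^ (-s) * 1)
    (C := ‖s‖ * ‖s - 1‖ * ((n : ℝ) + 1) ^ (-s.re - 1))
    (x := (n : ℝ) + 1) (y := n + 2) ?_ ?_ ⟨le_rfl, by linarith⟩ ⟨by linarith, le_rfl⟩
  · rw [show ‖(n : ℝ) + 2 - ((n : ℝ) + 1)‖ = 1 by norm_num, mul_one] at key
    refine le_trans (le_of_eq ?_) key
    congr 1
    unfold zetaIntegralDefect
    push_cast
    ring
  · exact fun y hy ↦ ((hasDerivAt_ofReal_cpow_const_of_pos (1 - s) (hn.trans_le hy.1)).sub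
      ((Complex.ofRealCLM.hasDerivAt (x := y)).const_mul _)).hasDerivWithinAt
  · intro y hy
    rw [show 1 - s - 1 = -s by ring, mul_one, ← mul_sub, norm_mul, norm_sub_rev 1 s]
    calc ‖s - 1‖ * ‖(y : ℂ) ^ (-s) - (((n : ℝ) + 1 : ℝ) : ℂ) ^ (-s)‖
        ≤ ‖s - 1‖ * (‖s‖ * ((n : ℝ) + 1) ^ (-s.re - 1) * (y - (n + 1))) := by
          gcongr; exact norm_cpow_neg_sub_le hs hn hy.1
      _ ≤ ‖s - 1‖ * (‖s‖ * ((n : ℝ) + 1) ^ (-s.re - 1) * 1) := by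
          gcongr; linarith [hy.2]
      _ = _ := by ring

lemma differentiable_zetaIntegralDefect (n : ℕ) : Differentiable ℂ (zetaIntegralDefect n) := by
  have h1 : ((n + 1 : ℕ) : ℂ) ≠ 0 := by exact_mod_cast n.succ_ne_zero
  have h2 : ((n + 2 : ℕ) : ℂ) ≠ 0 := by exact_mod_cast (n + 1).succ_ne_zero
  intro s
  exact (((by fun_prop : DifferentiableAt ℂ (fun s : ℂ ↦ s - 1) s).mul
    (DifferentiableAt.const_cpow (by fun_prop) (Or.inl h1))).add
    (DifferentiableAt.const_cpow (by fun_prop) (Or.inl h2))).sub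
    (DifferentiableAt.const_cpow (by fun_prop) (Or.inl h1))

lemma summable_zetaIntegralDefect {s : ℂ} (hs : 0 < s.re) :
    Summable fun n ↦ zetaIntegralDefect n s :=
  .of_norm_bounded ((summable_natCast_add_one_rpow (by linarith)).mul_left (‖s‖ * ‖s - 1‖))
    fun n ↦ norm_zetaIntegralDefect_le hs.le n

lemma tendsto_natCast_cpow_one_sub {s : ℂ} (hs : 1 < s.re) :
    Filter.Tendsto (fun n : ℕ ↦ (n : ℂ) ^ (1 - s)) Filter.atTop (nhds 0) := by
  rw [tendsto_zero_iff_norm_tendsto_zero]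
  refine ((tendsto_rpow_neg_atTop (sub_pos.2 hs)).comp tendsto_natCast_atTop_atTop).congr' ?_
  filter_upwards [Filter.eventually_gt_atTop 0] with n hn
  simp [Complex.norm_natCast_cpow_of_pos hn]

lemma riemannZeta₁_eq_of_one_lt_re {s : ℂ} (hs : 1 < s.re) :
    riemannZeta₁ s = 1 + ∑' n, zetaIntegralDefect n s := by
  have hs1 : s - 1 ≠ 0 := sub_ne_zero.2 <| by rintro rfl; simp at hs
  have hzeta : HasSum (fun n : ℕ ↦ (s - 1) * ((n + 1 : ℕ) : ℂ) ^ (-s))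
      ((s - 1) * riemannZeta s) := by
    rw [zeta_eq_tsum_one_div_nat_add_one_cpow hs]
    refine HasSum.mul_left _ ?_
    simpa [Complex.cpow_neg] using
      ((summable_nat_add_iff 1).2 (Complex.summable_one_div_nat_cpow.2 hs)).hasSum
  have htel : HasSum (fun n : ℕ ↦ ((n + 2 : ℕ) : ℂ) ^ (1 - s) - ((n + 1 : ℕ) : ℂ) ^ (1 - s))
      (0 - 1) := by
    have hsum : Summable fun n : ℕ ↦ ((n + 2 : ℕ) : ℂ) ^ (1 - s) - ((n + 1 : ℕ) : ℂ) ^ (1 - s) :=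
      ((summable_zetaIntegralDefect (by linarith : 0 < s.re)).sub hzeta.summable).congr
        fun n ↦ by unfold zetaIntegralDefect; ring
    refine hsum.hasSum_iff_tendsto_nat.2 ?_
    refine (((Filter.tendsto_add_atTop_iff_nat 1).2
      (tendsto_natCast_cpow_one_sub hs)).sub_const 1).congr fun N ↦ ?_
    rw [Finset.sum_range_sub fun n : ℕ ↦ ((n + 1 : ℕ) : ℂ) ^ (1 - s)]
    simp
  have hadd : HasSum (fun n ↦ zetaIntegralDefect n s) ((s - 1) * riemannZeta s + (0 - 1)) := by
    simpa only [zetaIntegralDefect, ← add_sub_assoc] using hzeta.add htel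
  rw [hadd.tsum_eq, riemannZeta_eq_inv_sub_mul (sub_ne_zero.1 hs1)]
  field_simp
  ring

lemma differentiableOn_tsum_zetaIntegralDefect {ε R : ℝ} (hε : 0 < ε) :
    DifferentiableOn ℂ (fun z ↦ ∑' n, zetaIntegralDefect n z)
      ({z | ε < z.re} ∩ Metric.ball 0 R) := by
  refine Complex.differentiableOn_tsum_of_summable_norm
    (u := fun n : ℕ ↦ R * (R + 1) * ((n : ℝ) + 1) ^ (-ε - 1))
    ((summable_natCast_add_one_rpow (by linarith)).mul_left _)
    (fun n ↦ (differentiable_zetaIntegralDefect n).differentiableOn)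
    ((isOpen_lt continuous_const Complex.continuous_re).inter Metric.isOpen_ball) ?_
  rintro n z ⟨hzε, hzR⟩
  have hzR : ‖z‖ < R := by simpa using hzR
  have hzε : ε < z.re := hzε
  have hz1 : ‖z - 1‖ ≤ R + 1 := (norm_sub_le _ _).trans (by simp; linarith)
  refine (norm_zetaIntegralDefect_le (hε.trans hzε).le n).trans ?_
  have hR : 0 ≤ R := (norm_nonneg z).trans hzR.le
  gcongr
  simp

lemma riemannZeta₁_eq_of_re_pos {s : ℂ} (hs : 0 < s.re) :
    riemannZeta₁ s = 1 + ∑' n, zetaIntegralDefect n s := by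
  set ε : ℝ := min s.re 1 / 2
  have hεs : ε < s.re := (half_lt_self (by positivity)).trans_le (min_le_left _ _)
  have hε1 : ε < 1 := (half_lt_self (by positivity)).trans_le (min_le_right _ _)
  set V : Set ℂ := {z | ε < z.re} ∩ Metric.ball 0 (‖s‖ + 3)
  have hVo : IsOpen V := (isOpen_lt continuous_const Complex.continuous_re).inter Metric.isOpen_ball
  have hVc : Convex ℝ V := (convex_halfSpace_re_gt _).inter (convex_ball _ _)
  have h2V : (2 : ℂ) ∈ V := ⟨by simp; linarith, by simp; linarith [norm_nonneg s]⟩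
  refine (differentiable_riemannZeta₁.differentiableOn.analyticOnNhd hVo
    ).eqOn_of_preconnected_of_eventuallyEq (((differentiableOn_const 1).add
    (differentiableOn_tsum_zetaIntegralDefect (by positivity))).analyticOnNhd hVo)
    hVc.isPreconnected h2V ?_ (⟨hεs, by simp⟩ : s ∈ V)
  filter_upwards [(isOpen_lt continuous_const Complex.continuous_re).mem_nhds
    (by norm_num : (1 : ℝ) < (2 : ℂ).re)] with z hz using riemannZeta₁_eq_of_one_lt_re hz

lemma exists_norm_riemannZeta₁_le {σ : ℝ} (hσ : 0 < σ) :
    ∃ C : ℝ, 1 ≤ C ∧ ∀ s : ℂ, σ ≤ s.re → ‖riemannZeta₁ s‖ ≤ C * (1 + ‖s‖) ^ 2 := by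
  set S := ∑' n : ℕ, ((n : ℝ) + 1) ^ (-σ - 1)
  have hS : 0 ≤ S := tsum_nonneg fun n ↦ by positivity
  refine ⟨1 + S, by linarith, fun s hs ↦ ?_⟩
  have htsum : ‖∑' n, zetaIntegralDefect n s‖ ≤ ‖s‖ * ‖s - 1‖ * S := by
    rw [← tsum_mul_left]
    refine tsum_of_norm_bounded
      ((summable_natCast_add_one_rpow (by linarith)).mul_left _).hasSum fun n ↦ ?_
    refine (norm_zetaIntegralDefect_le (hσ.le.trans hs) n).trans ?_
    gcongr
    simp
  have hs1 : ‖s - 1‖ ≤ ‖s‖ + 1 := (norm_sub_le _ _).trans (by simp)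
  have hquad : ‖s‖ * ‖s - 1‖ ≤ (1 + ‖s‖) ^ 2 := by nlinarith [norm_nonneg s]
  rw [riemannZeta₁_eq_of_re_pos (hσ.trans_le hs)]
  calc ‖1 + ∑' n, zetaIntegralDefect n s‖ ≤ 1 + ‖s‖ * ‖s - 1‖ * S :=
        (norm_add_le _ _).trans (by rw [norm_one]; gcongr)
    _ ≤ 1 + (1 + ‖s‖) ^ 2 * S := by gcongr
    _ ≤ (1 + S) * (1 + ‖s‖) ^ 2 := by nlinarith [norm_nonneg s]

section LogarithmicDerivative

variable {f : ℂ → ℂ} {c : ℂ} {R : ℝ}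

lemma exists_hasDerivAt_logDeriv_and_eq_mul_exp (hf : DifferentiableOn ℂ f (Metric.ball c R))
    (hne : ∀ z ∈ Metric.ball c R, f z ≠ 0) :
    ∃ g : ℂ → ℂ, g c = 0 ∧ ∀ z ∈ Metric.ball c R,
      HasDerivAt g (logDeriv f z) z ∧ f z = f c * cexp (g z) := by
  obtain ⟨g, hgc, hg⟩ :=
    ((hf.deriv Metric.isOpen_ball).div hf hne).isExactOn_ball.with_val_at c 0
  refine ⟨g, hgc, fun z hz ↦ ⟨hg z hz, ?_⟩⟩
  have hquot : ∀ w ∈ Metric.ball c R, HasDerivAt (fun w ↦ f w * cexp (-g w)) 0 w := by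
    intro w hw
    refine ((hf.differentiableAt (Metric.isOpen_ball.mem_nhds hw)).hasDerivAt.mul
      (hg w hw).neg.cexp).congr_deriv ?_
    have := hne w hw
    simp only [Pi.div_apply, Pi.neg_apply]
    field_simp
    ring
  have hconst : f z * cexp (-g z) = f c := by
    simpa [hgc] using Metric.isOpen_ball.is_const_of_deriv_eq_zero (convex_ball c R).isPreconnected
      (fun w hw ↦ (hquot w hw).differentiableAt.differentiableWithinAt)
      (fun w hw ↦ (hquot w hw).deriv) hz
      (Metric.mem_ball_self (dist_nonneg.trans_lt (Metric.mem_ball.1 hz)))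
  rw [← hconst, mul_assoc, ← Complex.exp_add, neg_add_cancel, Complex.exp_zero, mul_one]

lemma norm_le_of_re_le_of_eq_zero {g : ℂ → ℂ} {M : ℝ} {w : ℂ}
    (hg : DifferentiableOn ℂ g (Metric.ball c R)) (hgc : g c = 0) (hM : 0 < M)
    (hre : ∀ z ∈ Metric.ball c R, (g z).re ≤ M) (hw : ‖w - c‖ < R) :
    ‖g w‖ ≤ 2 * M * ‖w - c‖ / (R - ‖w - c‖) := by
  have hmaps : Set.MapsTo (fun v ↦ c + v) (Metric.ball 0 R) (Metric.ball c R) :=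
    fun v hv ↦ by simpa [dist_eq_norm] using hv
  simpa only [add_sub_cancel] using Complex.borelCaratheodory_zero (f := fun v ↦ g (c + v)) hM
    (hg.comp (by fun_prop) hmaps) (fun v hv ↦ hre _ (hmaps hv)) ((norm_nonneg _).trans_lt hw)
    (mem_ball_zero_iff.2 hw) (by simpa using hgc)

lemma norm_logDeriv_le_of_norm_le_mul {M r : ℝ} {z : ℂ}
    (hf : DifferentiableOn ℂ f (Metric.ball c R)) (hne : ∀ z ∈ Metric.ball c R, f z ≠ 0)
    (hM : 1 < M) (hb : ∀ z ∈ Metric.ball c R, ‖f z‖ ≤ M * ‖f c‖) (hrR : r < R)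
    (hz : ‖z - c‖ ≤ r) :
    ‖logDeriv f z‖ ≤ 8 * R / (R - r) ^ 2 * Real.log M := by
  have hR : 0 < R := ((norm_nonneg _).trans hz).trans_lt hrR
  have hlog : 0 < Real.log M := Real.log_pos hM
  obtain ⟨g, hgc, hg⟩ := exists_hasDerivAt_logDeriv_and_eq_mul_exp hf hne
  have hgd : DifferentiableOn ℂ g (Metric.ball c R) := fun w hw ↦
    (hg w hw).1.differentiableAt.differentiableWithinAt
  have hre : ∀ w ∈ Metric.ball c R, (g w).re ≤ Real.log M := by
    intro w hw
    have hfc : 0 < ‖f c‖ := norm_pos_iff.2 (hne c (Metric.mem_ball_self hR))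
    have hfw := hb w hw
    rw [(hg w hw).2, norm_mul, Complex.norm_exp, mul_comm] at hfw
    exact (Real.le_log_iff_exp_le (by linarith)).2 (le_of_mul_le_mul_right hfw hfc)
  have hnorm : ∀ w, ‖w - c‖ ≤ (r + R) / 2 → ‖g w‖ ≤ 4 * R / (R - r) * Real.log M := by
    intro w hw
    have hwR : ‖w - c‖ < R := by linarith
    calc ‖g w‖ ≤ 2 * Real.log M * ‖w - c‖ / (R - ‖w - c‖) :=
          norm_le_of_re_le_of_eq_zero hgd hgc hlog hre hwR
      _ ≤ 2 * Real.log M * R / ((R - r) / 2) := by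
          gcongr
          linarith
      _ = _ := by field_simp; ring
  have htri : ∀ w, ‖w - z‖ ≤ (R - r) / 2 → ‖w - c‖ ≤ (r + R) / 2 := fun w hw ↦ by
    linarith [norm_sub_le_norm_sub_add_norm_sub w z c]
  have hball : Metric.closedBall z ((R - r) / 2) ⊆ Metric.ball c R := fun w hw ↦ by
    rw [mem_ball_iff_norm]
    linarith [htri w (mem_closedBall_iff_norm.1 hw)]
  have hcauchy := Complex.norm_deriv_le_of_forall_mem_sphere_norm_le
    (by linarith : 0 < (R - r) / 2)
    ((hgd.mono hball).diffContOnCl_ball subset_rfl)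
    fun w hw ↦ hnorm w (htri w (mem_sphere_iff_norm.1 hw).le)
  have hzR : z ∈ Metric.ball c R := by rw [mem_ball_iff_norm]; linarith
  rw [(hg z hzR).1.deriv] at hcauchy
  refine hcauchy.trans_eq ?_
  have : R - r ≠ 0 := by linarith
  field_simp
  ring

end LogarithmicDerivative

section ZetaRightOfOne

lemma norm_LSeries_ofReal_le {f : ℕ → ℝ} (hf : ∀ n, 0 ≤ f n) {s : ℂ}
    (hs : LSeriesSummable (fun n ↦ (f n : ℂ)) s.re) :
    ‖LSeries (fun n ↦ (f n : ℂ)) s‖ ≤ (LSeries (fun n ↦ (f n : ℂ)) s.re).re := by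
  refine tsum_of_norm_bounded (Complex.hasSum_re hs.hasSum) fun n ↦ ?_
  rw [LSeries.norm_term_eq]
  rcases eq_or_ne n 0 with rfl | hn
  · simp
  · rw [if_neg hn, LSeries.term_of_ne_zero hn, ← Complex.ofReal_natCast,
      ← Complex.ofReal_cpow n.cast_nonneg, ← Complex.ofReal_div, Complex.ofReal_re,
      Complex.norm_real, Real.norm_of_nonneg (hf n)]

lemma norm_riemannZeta_le_re {s : ℂ} (hs : 1 < s.re) :
    ‖riemannZeta s‖ ≤ (riemannZeta s.re).re := by
  have hs' : 1 < (s.re : ℂ).re := by simpa using hs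
  have hone : (fun _ : ℕ ↦ ((1 : ℝ) : ℂ)) = 1 := by ext; simp
  have key := norm_LSeries_ofReal_le (f := fun _ ↦ 1) (fun _ ↦ zero_le_one) (s := s)
  simp only [hone, LSeries_one_eq_riemannZeta hs, LSeries_one_eq_riemannZeta hs'] at key
  exact key (LSeriesSummable_one_iff.2 hs')

lemma norm_logDeriv_riemannZeta_le_re {s : ℂ} (hs : 1 < s.re) :
    ‖logDeriv riemannZeta s‖ ≤ (-logDeriv riemannZeta s.re).re := by
  have hs' : 1 < (s.re : ℂ).re := by simpa using hs
  have key := norm_LSeries_ofReal_le (fun _ ↦ ArithmeticFunction.vonMangoldt_nonneg)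
    (ArithmeticFunction.LSeriesSummable_vonMangoldt hs')
  rwa [ArithmeticFunction.LSeries_vonMangoldt_eq_deriv_riemannZeta_div hs, neg_div, norm_neg,
    ArithmeticFunction.LSeries_vonMangoldt_eq_deriv_riemannZeta_div hs', neg_div] at key

lemma one_fourth_le_norm_riemannZeta_of_re_eq_two {s : ℂ} (hs : s.re = 2) :
    1 / 4 ≤ ‖riemannZeta s‖ := by
  have hs1 : 1 < s.re := by rw [hs]; norm_num
  have hzeta : riemannZeta s = 1 + ∑' n : ℕ, 1 / ((n : ℂ) + 2) ^ s := by
    have hsum : Summable fun n : ℕ ↦ 1 / ((n : ℂ) + 1) ^ s := by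
      simpa using (summable_nat_add_iff 1).2 (Complex.summable_one_div_nat_cpow.2 hs1)
    rw [zeta_eq_tsum_one_div_nat_add_one_cpow hs1, hsum.tsum_eq_zero_add]
    norm_num [add_assoc]
  have htail : ‖∑' n : ℕ, 1 / ((n : ℂ) + 2) ^ s‖ ≤ π ^ 2 / 6 - 1 := by
    have hreal : HasSum (fun n : ℕ ↦ (1 : ℝ) / ((n : ℝ) + 2) ^ 2) (π ^ 2 / 6 - 1) := by
      simpa [Finset.sum_range_succ] using (hasSum_nat_add_iff' 2).2 hasSum_zeta_two
    refine tsum_of_norm_bounded hreal fun n ↦ le_of_eq ?_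
    rw [show (n : ℂ) + 2 = ((n + 2 : ℕ) : ℂ) by push_cast; rfl, norm_div,
      Complex.norm_natCast_cpow_of_pos (by omega), hs]
    simp
  have hpi : π ^ 2 / 6 - 1 ≤ 3 / 4 := by nlinarith [Real.pi_lt_d2, Real.pi_pos]
  have htri := norm_sub_le_norm_add (1 : ℂ) (∑' n : ℕ, 1 / ((n : ℂ) + 2) ^ s)
  rw [norm_one] at htri
  rw [hzeta]
  linarith

end ZetaRightOfOne

lemma riemannZeta₁_eq_sub_one_mul {s : ℂ} (hs : s ≠ 1) :
    riemannZeta₁ s = (s - 1) * riemannZeta s := by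
  rw [riemannZeta_eq_inv_sub_mul hs, mul_inv_cancel_left₀ (sub_ne_zero.2 hs)]

lemma ne_one_of_one_lt_re {s : ℂ} (hs : 1 < s.re) : s ≠ 1 := by
  rintro rfl
  simp at hs

lemma riemannZeta₁_ne_zero (hRH : RiemannHypothesis) {s : ℂ} (hs : 1 / 2 < s.re) :
    riemannZeta₁ s ≠ 0 := by
  rcases eq_or_ne s 1 with rfl | h1
  · simp
  rw [riemannZeta₁_eq_sub_one_mul h1]
  refine mul_ne_zero (sub_ne_zero.2 h1) fun h0 ↦ hs.ne' (hRH s h0 ?_ h1)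
  rintro ⟨n, rfl⟩
  norm_num at hs
  linarith [(n.cast_nonneg : (0 : ℝ) ≤ n)]

lemma logDeriv_riemannZeta₁ {s : ℂ} (hs : 1 < s.re) :
    logDeriv riemannZeta₁ s = logDeriv riemannZeta s + 1 / (s - 1) := by
  have h1 := ne_one_of_one_lt_re hs
  have heq : riemannZeta₁ =ᶠ[nhds s] fun z ↦ (z - 1) * riemannZeta z := by
    filter_upwards [isOpen_ne.mem_nhds h1] with z hz using riemannZeta₁_eq_sub_one_mul hz
  rw [(logDeriv_congr_nhds heq).self_of_nhds, logDeriv_mul (f := fun z ↦ z - 1) s (sub_ne_zero.2 h1)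
    (riemannZeta_ne_zero_of_one_le_re hs.le) (by fun_prop) (differentiableAt_riemannZeta h1),
    add_comm]
  simp [logDeriv_apply]

lemma one_le_log_five_add_abs (t : ℝ) : 1 ≤ Real.log (5 + |t|) := by
  rw [Real.le_log_iff_exp_le (by positivity)]
  linarith [Real.exp_one_lt_d9, abs_nonneg t]

/-- The size `1 + log log (5 + |t|)` of `ζ'/ζ` and of `ζ` on the line `Re s = 1` at height `t` under
the Riemann hypothesis; the shifts make it at least `1`. -/
noncomputable def logLogHeight (t : ℝ) : ℝ := 1 + Real.log (Real.log (5 + |t|))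

lemma one_le_logLogHeight (t : ℝ) : 1 ≤ logLogHeight t :=
  le_add_of_nonneg_right (Real.log_nonneg (one_le_log_five_add_abs t))

lemma one_half_lt_re_of_mem_ball {t : ℝ} {z : ℂ} (hz : z ∈ Metric.ball (⟨2, t⟩ : ℂ) (3 / 2)) :
    1 / 2 < z.re := by
  have h := (abs_re_le_norm (z - ⟨2, t⟩)).trans_lt (mem_ball_iff_norm.1 hz)
  rw [sub_re] at h
  linarith [(abs_lt.1 h).1]

lemma exists_norm_riemannZeta₁_le_mul_norm_two_add :
    ∃ C : ℝ, 1 ≤ C ∧ ∀ (t : ℝ), ∀ z ∈ Metric.ball (⟨2, t⟩ : ℂ) (3 / 2),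
      ‖riemannZeta₁ z‖ ≤ C * (5 + |t|) ^ 2 * ‖riemannZeta₁ ⟨2, t⟩‖ := by
  obtain ⟨C, hC1, hC⟩ := exists_norm_riemannZeta₁_le (σ := 1 / 2) (by norm_num)
  refine ⟨4 * C, by linarith, fun t z hz ↦ ?_⟩
  set c : ℂ := ⟨2, t⟩
  have hcenter : 1 / 4 ≤ ‖riemannZeta₁ c‖ := by
    have hc : 1 < c.re := by norm_num [c]
    have hc1 : 1 ≤ ‖c - 1‖ := by simpa [c] using (le_of_eq (by norm_num)).trans (re_le_norm (c - 1))
    rw [riemannZeta₁_eq_sub_one_mul (ne_one_of_one_lt_re hc), norm_mul]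
    nlinarith [one_fourth_le_norm_riemannZeta_of_re_eq_two (s := c) rfl]
  have hsize : 1 + ‖z‖ ≤ 5 + |t| := by
    have hcn : ‖c‖ ≤ 2 + |t| := by simpa [c] using norm_le_abs_re_add_abs_im c
    linarith [norm_le_norm_sub_add z c, mem_ball_iff_norm.1 hz]
  calc ‖riemannZeta₁ z‖ ≤ C * (1 + ‖z‖) ^ 2 := hC z (one_half_lt_re_of_mem_ball hz).le
    _ ≤ C * (5 + |t|) ^ 2 := by gcongr
    _ = 4 * C * (5 + |t|) ^ 2 * (1 / 4) := by ring
    _ ≤ _ := by gcongr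

lemma exists_norm_logDeriv_riemannZeta₁_le_log (hRH : RiemannHypothesis) {σ : ℝ}
    (hσ : 1 / 2 < σ) :
    ∃ K : ℝ, 0 < K ∧ ∀ s : ℂ, σ ≤ s.re → s.re ≤ 2 →
      ‖logDeriv riemannZeta₁ s‖ ≤ K * Real.log (5 + |s.im|) := by
  obtain ⟨C, hC1, hgrowth⟩ := exists_norm_riemannZeta₁_le_mul_norm_two_add
  have hlC : 0 ≤ Real.log C := Real.log_nonneg hC1
  have hκ : 0 < 8 * (3 / 2) / (3 / 2 - (2 - σ)) ^ 2 := by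
    have : 0 < 3 / 2 - (2 - σ) := by linarith
    positivity
  refine ⟨8 * (3 / 2) / (3 / 2 - (2 - σ)) ^ 2 * (Real.log C + 2), by positivity,
    fun s hσs hs2 ↦ ?_⟩
  have hdist : ‖s - ⟨2, s.im⟩‖ ≤ 2 - σ := by
    rw [show s - ⟨2, s.im⟩ = ((s.re - 2 : ℝ) : ℂ) by apply Complex.ext <;> simp, norm_real,
      Real.norm_eq_abs, abs_le]
    constructor <;> linarith
  have hM : 1 < C * (5 + |s.im|) ^ 2 := by nlinarith [abs_nonneg s.im]
  refine (norm_logDeriv_le_of_norm_le_mul differentiable_riemannZeta₁.differentiableOn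
    (fun z hz ↦ riemannZeta₁_ne_zero hRH (one_half_lt_re_of_mem_ball hz)) hM (hgrowth s.im)
    (by linarith) hdist).trans ?_
  rw [mul_assoc _ (_ + _)]
  gcongr
  rw [Real.log_mul (by positivity) (by positivity), Real.log_pow]
  push_cast
  nlinarith [one_le_log_five_add_abs s.im]

section GaussianThreeLines

lemma norm_cexp_sq_sub_le {s s₀ : ℂ} (h : |s.re - s₀.re| ≤ 2) :
    ‖cexp ((s - s₀) ^ 2)‖ ≤ Real.exp 4 * Real.exp (-(s.im - s₀.im) ^ 2) := by
  rw [Complex.norm_exp, ← Real.exp_add, Real.exp_le_exp]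
  simp only [pow_two, mul_re, sub_re, sub_im]
  nlinarith [abs_le.1 h]

lemma abs_mul_exp_neg_sq_le_one (v : ℝ) : |v| * Real.exp (-v ^ 2) ≤ 1 := by
  rw [Real.exp_neg, ← div_eq_mul_inv, div_le_one (Real.exp_pos _)]
  nlinarith [Real.add_one_le_exp (v ^ 2), sq_abs v, sq_nonneg (|v| - 1)]

lemma closure_verticalStrip_subset (l u : ℝ) :
    closure (HadamardThreeLines.verticalStrip l u) ⊆ HadamardThreeLines.verticalClosedStrip l u :=
  closure_minimal (Set.preimage_mono Set.Ioo_subset_Icc_self)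
    (isClosed_Icc.preimage continuous_re)

-- The weight `exp ((s - s₀) ^ 2)` has modulus at most `e ^ 4` on the strip, equals `1` at `s₀`, and
-- absorbs the growth of `F`, so the three lines theorem for bounded functions applies.
lemma norm_le_interp_of_norm_le_add_abs_im {F : ℂ → ℂ} {s₀ : ℂ} {l u a b ℓ : ℝ} (hlu : l < u)
    (hul : u - l ≤ 2) (hF : DifferentiableOn ℂ F (re ⁻¹' Set.Icc l u)) (hs₀ : s₀.re ∈ Set.Icc l u)
    (ha : 0 ≤ a) (hℓ : 1 ≤ ℓ)
    (hstrip : ∀ s : ℂ, s.re ∈ Set.Icc l u → ‖F s‖ ≤ a * (ℓ + |s.im - s₀.im|))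
    (hline : ∀ s : ℂ, s.re = u → ‖F s‖ ≤ b) :
    ‖F s₀‖ ≤ (2 * Real.exp 4 * a * ℓ) ^ (1 - (s₀.re - l) / (u - l)) *
      (Real.exp 4 * b) ^ ((s₀.re - l) / (u - l)) := by
  set G : ℂ → ℂ := fun s ↦ F s * cexp ((s - s₀) ^ 2) with hG
  have hweight : ∀ s : ℂ, s.re ∈ Set.Icc l u →
      ‖cexp ((s - s₀) ^ 2)‖ ≤ Real.exp 4 * Real.exp (-(s.im - s₀.im) ^ 2) := fun s hs ↦
    norm_cexp_sq_sub_le (by rw [abs_le]; constructor <;> linarith [hs.1, hs.2, hs₀.1, hs₀.2])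
  have hexp : ∀ v : ℝ, Real.exp (-v ^ 2) ≤ 1 := fun v ↦ by
    rw [Real.exp_le_one_iff]; linarith [sq_nonneg v]
  have hGstrip : ∀ s : ℂ, s.re ∈ Set.Icc l u → ‖G s‖ ≤ 2 * Real.exp 4 * a * ℓ := by
    intro s hs
    set v := s.im - s₀.im
    calc ‖G s‖ = ‖F s‖ * ‖cexp ((s - s₀) ^ 2)‖ := norm_mul _ _
      _ ≤ a * (ℓ + |v|) * (Real.exp 4 * Real.exp (-v ^ 2)) := by
          gcongr
          exacts [hstrip s hs, hweight s hs]
      _ = Real.exp 4 * a * (ℓ * Real.exp (-v ^ 2) + |v| * Real.exp (-v ^ 2)) := by ring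
      _ ≤ Real.exp 4 * a * (ℓ * 1 + ℓ) := by
          gcongr
          exacts [hexp v, (abs_mul_exp_neg_sq_le_one v).trans hℓ]
      _ = 2 * Real.exp 4 * a * ℓ := by ring
  have hGline : ∀ s : ℂ, s.re = u → ‖G s‖ ≤ Real.exp 4 * b := fun s hs ↦
    calc ‖G s‖ = ‖cexp ((s - s₀) ^ 2)‖ * ‖F s‖ := by rw [hG, norm_mul, mul_comm]
      _ ≤ Real.exp 4 * 1 * b := by
          gcongr
          exacts [(hweight s ⟨hs ▸ hlu.le, hs.le⟩).trans (by gcongr; exact hexp _), hline s hs]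
      _ = Real.exp 4 * b := by rw [mul_one]
  have key := HadamardThreeLines.norm_le_interp_of_mem_verticalClosedStrip' (f := G) hlu hs₀
    ((hF.mul (by fun_prop)).mono (closure_verticalStrip_subset l u)).diffContOnCl
    ⟨_, Set.forall_mem_image.2 hGstrip⟩
    (fun z hz ↦ hGstrip z (by rw [show z.re = l from hz]; exact ⟨le_rfl, hlu.le⟩)) hGline
  simpa [hG] using key

end GaussianThreeLines

section LogDerivNearOne

lemma exists_norm_logDeriv_riemannZeta₁_le_div (hRH : RiemannHypothesis) :
    ∃ C : ℝ, 1 ≤ C ∧ ∀ s : ℂ, 1 < s.re → s.re ≤ 2 →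
      ‖logDeriv riemannZeta₁ s‖ ≤ C / (s.re - 1) := by
  obtain ⟨K, hK, hbound⟩ := exists_norm_logDeriv_riemannZeta₁_le_log hRH (σ := 1) (by norm_num)
  have hlog : 0 ≤ Real.log 5 := Real.log_nonneg (by norm_num)
  refine ⟨2 + K * Real.log 5, by nlinarith, fun s hs hs2 ↦ ?_⟩
  have hη : 0 < s.re - 1 := by linarith
  have hreal : ‖logDeriv riemannZeta₁ s.re‖ ≤ K * Real.log 5 := by
    simpa using hbound s.re (by simpa using hs.le) (by simpa using hs2)
  have hzeta : ‖logDeriv riemannZeta s‖ ≤ K * Real.log 5 + 1 / (s.re - 1) := by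
    refine (norm_logDeriv_riemannZeta_le_re hs).trans ?_
    have heq : -logDeriv riemannZeta s.re =
        -logDeriv riemannZeta₁ s.re + ((1 / (s.re - 1) : ℝ) : ℂ) := by
      rw [logDeriv_riemannZeta₁ (by simpa using hs)]
      push_cast
      ring
    rw [heq, add_re, ofReal_re]
    gcongr
    exact (re_le_norm _).trans ((norm_neg _).trans_le hreal)
  have hpole : ‖1 / (s - 1)‖ ≤ 1 / (s.re - 1) := by
    rw [norm_div, norm_one]
    gcongr
    simpa using re_le_norm (s - 1)
  rw [logDeriv_riemannZeta₁ hs, le_div_iff₀ hη]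
  have hsum := (norm_add_le (logDeriv riemannZeta s) _).trans (add_le_add hzeta hpole)
  have hmul := mul_le_mul_of_nonneg_right hsum hη.le
  rw [add_mul, add_mul, one_div_mul_cancel hη.ne'] at hmul
  nlinarith [mul_nonneg hK.le hlog]

lemma log_five_add_abs_le (t v : ℝ) :
    Real.log (5 + |v|) ≤ Real.log (5 + |t|) + |v - t| := by
  rw [← Real.log_exp |v - t|, ← Real.log_mul (by positivity) (Real.exp_ne_zero _)]
  have htri : |v| ≤ |t| + |v - t| := by linarith [abs_sub_abs_le_abs_sub v t]
  gcongr
  nlinarith [Real.add_one_le_exp |v - t|, abs_nonneg t, abs_nonneg (v - t)]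

lemma rpow_mul_rpow_le_mul_exp {X Y ℓ θ c : ℝ} (hX : 1 ≤ X) (hY : 1 ≤ Y) (hℓ : 0 < ℓ)
    (hθ0 : 0 ≤ θ) (hθ1 : θ ≤ 1) (hc : (1 - θ) * Real.log ℓ ≤ c) :
    (X * ℓ) ^ (1 - θ) * Y ^ θ ≤ X * Real.exp c * Y := by
  rw [Real.mul_rpow (by positivity) hℓ.le, Real.rpow_def_of_pos hℓ, mul_comm (Real.log ℓ)]
  gcongr
  · exact Real.rpow_le_self_of_one_le hX (by linarith)
  · exact Real.rpow_le_self_of_one_le hY hθ1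

lemma one_sub_mul_le_eight {σ L x : ℝ} (hL : 1 ≤ L) (hσ : 1 ≤ σ) (hx : 0 ≤ x) (hxL : x ≤ L) :
    (1 - (σ - 7 / 8) / (1 + 1 / L - 7 / 8)) * x ≤ 8 := by
  have hη : 0 < 1 / L := by positivity
  have hden : 0 < 1 + 1 / L - 7 / 8 := by linarith
  have h8 : 1 - (σ - 7 / 8) / (1 + 1 / L - 7 / 8) ≤ 8 * (1 / L) := by
    rw [one_sub_div hden.ne', div_le_iff₀ hden]
    nlinarith
  calc (1 - (σ - 7 / 8) / (1 + 1 / L - 7 / 8)) * x ≤ 8 * (1 / L) * L :=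
        mul_le_mul h8 hxL hx (by positivity)
    _ = 8 := by field_simp

lemma exists_norm_logDeriv_riemannZeta₁_le_logLogHeight (hRH : RiemannHypothesis) :
    ∃ K : ℝ, 1 ≤ K ∧ ∀ s : ℂ, 1 ≤ s.re → s.re ≤ 1 + 1 / logLogHeight s.im →
      ‖logDeriv riemannZeta₁ s‖ ≤ K * logLogHeight s.im := by
  obtain ⟨K, hK, hstrip⟩ := exists_norm_logDeriv_riemannZeta₁_le_log hRH (σ := 7 / 8) (by norm_num)
  obtain ⟨C, hC, hline⟩ := exists_norm_logDeriv_riemannZeta₁_le_div hRH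
  have he : 1 ≤ Real.exp 4 := by simp
  refine ⟨max 1 (2 * Real.exp 4 * K) * Real.exp 8 * (Real.exp 4 * C),
    one_le_mul_of_one_le_of_one_le (one_le_mul_of_one_le_of_one_le (le_max_left _ _) (by simp))
      (one_le_mul_of_one_le_of_one_le he hC), fun s hs1 hs2 ↦ ?_⟩
  set L := logLogHeight s.im
  have hL : 1 ≤ L := one_le_logLogHeight _
  have hL' : 1 / L ≤ 1 := div_le_one_of_le₀ hL (by positivity)
  have hη : 0 < 1 / L := by positivity
  set ℓ := Real.log (5 + |s.im|)
  have hℓ1 : 1 ≤ ℓ := one_le_log_five_add_abs _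
  have hdiff : DifferentiableOn ℂ (logDeriv riemannZeta₁) (re ⁻¹' Set.Icc (7 / 8) (1 + 1 / L)) :=
    differentiable_riemannZeta₁.deriv.differentiableOn.div
      differentiable_riemannZeta₁.differentiableOn
      fun z hz ↦ riemannZeta₁_ne_zero hRH (by linarith [hz.1])
  have key := norm_le_interp_of_norm_le_add_abs_im (s₀ := s) (a := K) (b := C * L) (ℓ := ℓ)
    (by linarith) (by linarith) hdiff ⟨by linarith, hs2⟩ hK.le hℓ1
    (fun z hz ↦ (hstrip z hz.1 (by linarith [hz.2])).trans (by
      gcongr; exact log_five_add_abs_le _ _))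
    fun z hz ↦ by simpa [hz] using hline z (by linarith) (by linarith)
  have hden : 0 < 1 + 1 / L - 7 / 8 := by linarith
  set θ := (s.re - 7 / 8) / (1 + 1 / L - 7 / 8)
  have hθ0 : 0 ≤ θ := div_nonneg (by linarith) hden.le
  have hθ1 : θ ≤ 1 := div_le_one_of_le₀ (by linarith) hden.le
  have hexponent : (1 - θ) * Real.log ℓ ≤ 8 :=
    one_sub_mul_le_eight hL hs1 (Real.log_nonneg hℓ1) (le_add_of_nonneg_left zero_le_one)
  calc ‖logDeriv riemannZeta₁ s‖
      ≤ (2 * Real.exp 4 * K * ℓ) ^ (1 - θ) * (Real.exp 4 * (C * L)) ^ θ := key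
    _ ≤ (max 1 (2 * Real.exp 4 * K) * ℓ) ^ (1 - θ) * (Real.exp 4 * (C * L)) ^ θ := by
        gcongr
        exact le_max_right _ _
    _ ≤ max 1 (2 * Real.exp 4 * K) * Real.exp 8 * (Real.exp 4 * (C * L)) :=
        rpow_mul_rpow_le_mul_exp (le_max_left _ _)
          (one_le_mul_of_one_le_of_one_le he (one_le_mul_of_one_le_of_one_le hC hL))
          (by linarith) hθ0 hθ1 hexponent
    _ = _ := by ring

end LogDerivNearOne

section ZetaNearOne

lemma exists_norm_riemannZeta_le_div_norm_sub_one (T : ℝ) :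
    ∃ C : ℝ, 1 ≤ C ∧ ∀ s : ℂ, 1 < s.re → s.re ≤ 2 → |s.im| ≤ T →
      ‖riemannZeta s‖ ≤ C / ‖s - 1‖ := by
  obtain ⟨C, hC1, hC⟩ := exists_norm_riemannZeta₁_le (σ := 1) one_pos
  refine ⟨C * (1 + (2 + |T|)) ^ 2, by nlinarith [abs_nonneg T], fun s hs1 hs2 hsT ↦ ?_⟩
  have hne := ne_one_of_one_lt_re hs1
  rw [le_div_iff₀' (norm_pos_iff.2 (sub_ne_zero.2 hne)), ← norm_mul,
    ← riemannZeta₁_eq_sub_one_mul hne]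
  refine (hC s hs1.le).trans ?_
  gcongr
  calc ‖s‖ ≤ |s.re| + |s.im| := norm_le_abs_re_add_abs_im s
    _ ≤ 2 + |T| := by
        refine add_le_add ?_ (hsT.trans (le_abs_self T))
        rwa [abs_of_pos (by linarith)]

lemma exists_norm_riemannZeta_le_div_re_sub_one :
    ∃ C : ℝ, 1 ≤ C ∧ ∀ s : ℂ, 1 < s.re → s.re ≤ 2 → ‖riemannZeta s‖ ≤ C / (s.re - 1) := by
  obtain ⟨C, hC1, hC⟩ := exists_norm_riemannZeta_le_div_norm_sub_one 0
  refine ⟨C, hC1, fun s hs1 hs2 ↦ (norm_riemannZeta_le_re hs1).trans ((re_le_norm _).trans ?_)⟩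
  have h := hC s.re (by simpa using hs1) (by simpa using hs2) (by simp)
  rwa [← ofReal_one, ← ofReal_sub, norm_real, Real.norm_of_nonneg (by linarith)] at h

lemma norm_le_norm_mul_exp_of_norm_deriv_le {f : ℂ → ℂ} (hf : Differentiable ℂ f) {t M a b : ℝ}
    (hab : a ≤ b)
    (hderiv : ∀ σ ∈ Set.Icc a b, ‖deriv f (σ + t * I)‖ ≤ M * ‖f (σ + t * I)‖) :
    ‖f (a + t * I)‖ ≤ ‖f (b + t * I)‖ * Real.exp (M * (b - a)) := by
  have hline : ∀ y : ℝ, HasDerivAt (fun y : ℝ ↦ f ((b - y : ℝ) + t * I))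
      (-deriv f ((b - y : ℝ) + t * I)) y := by
    intro y
    have hinner : HasDerivAt (fun y : ℝ ↦ ((b - y : ℝ) : ℂ) + t * I) (-1 : ℂ) y := by
      simpa using (((hasDerivAt_id y).const_sub b).ofReal_comp).add_const (t * I)
    simpa [Function.comp_def] using (hf (((b - y : ℝ) : ℂ) + t * I)).hasDerivAt.comp y hinner
  have key := norm_le_gronwallBound_of_norm_deriv_right_le (ε := 0) (a := 0) (b := b - a) (K := M)
    (fun y _ ↦ (hline y).continuousAt.continuousWithinAt)
    (fun y _ ↦ (hline y).hasDerivWithinAt) le_rfl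
    (fun y hy ↦ by
      rw [norm_neg, add_zero]
      exact hderiv (b - y) ⟨by linarith [hy.2], by linarith [hy.1]⟩)
    (b - a) ⟨by linarith, le_rfl⟩
  rw [gronwallBound_ε0] at key
  simpa using key

lemma exists_norm_riemannZeta₁_le_mul_norm_one_add_one_div (hRH : RiemannHypothesis) :
    ∃ C : ℝ, 1 ≤ C ∧ ∀ s : ℂ, 1 < s.re → s.re ≤ 1 + 1 / logLogHeight s.im →
      ‖riemannZeta₁ s‖ ≤ C * ‖riemannZeta₁ ((1 + 1 / logLogHeight s.im : ℝ) + s.im * I)‖ := by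
  obtain ⟨K, hK1, hK⟩ := exists_norm_logDeriv_riemannZeta₁_le_logLogHeight hRH
  refine ⟨Real.exp K, Real.one_le_exp_iff.2 (by linarith), fun s hs1 hs2 ↦ ?_⟩
  set L := logLogHeight s.im
  have hL : 1 ≤ L := one_le_logLogHeight _
  have hderiv : ∀ σ ∈ Set.Icc s.re (1 + 1 / L),
      ‖deriv riemannZeta₁ (σ + s.im * I)‖ ≤ K * L * ‖riemannZeta₁ (σ + s.im * I)‖ := by
    intro σ hσ
    have h := hK (σ + s.im * I) (by simpa using hs1.le.trans hσ.1) (by simpa using hσ.2)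
    have hne := riemannZeta₁_ne_zero hRH (s := σ + s.im * I) (by simp; linarith [hσ.1])
    simpa [logDeriv_apply, div_le_iff₀ (norm_pos_iff.2 hne)] using h
  have hgron := norm_le_norm_mul_exp_of_norm_deriv_le differentiable_riemannZeta₁ hs2 hderiv
  rw [re_add_im] at hgron
  have hexp : K * L * (1 + 1 / L - s.re) ≤ K :=
    calc K * L * (1 + 1 / L - s.re) ≤ K * L * (1 / L) := by gcongr; linarith
      _ = K := by field_simp
  rw [mul_comm]
  exact hgron.trans (by gcongr)

-- For `L` the height, `ζ ≪ L` holds at abscissa `1 + 1 / L`, and moving left from there changes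
-- `ζ₁` by a bounded factor only: `ζ₁'/ζ₁ ≪ L` and the distance travelled is at most `1 / L`.
lemma exists_norm_riemannZeta_le_logLogHeight (hRH : RiemannHypothesis) :
    ∃ C : ℝ, 1 ≤ C ∧ ∀ s : ℂ, 1 < s.re → s.re ≤ 2 → 1 ≤ |s.im| →
      ‖riemannZeta s‖ ≤ C * logLogHeight s.im := by
  obtain ⟨C, hC1, hC⟩ := exists_norm_riemannZeta_le_div_re_sub_one
  obtain ⟨C', hC'1, hC'⟩ := exists_norm_riemannZeta₁_le_mul_norm_one_add_one_div hRH
  refine ⟨C * C' * 2, by nlinarith, fun s hs1 hs2 him ↦ ?_⟩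
  set L := logLogHeight s.im
  have hL : 1 ≤ L := one_le_logLogHeight _
  have hη : 0 < 1 / L := by positivity
  have hη1 : 1 / L ≤ 1 := div_le_one_of_le₀ hL (by positivity)
  rcases le_or_gt (1 + 1 / L) s.re with hfar | hnear
  · calc ‖riemannZeta s‖ ≤ C / (s.re - 1) := hC s hs1 hs2
      _ ≤ C / (1 / L) := by gcongr; linarith
      _ = C * 1 * 1 * L := by field_simp
      _ ≤ C * C' * 2 * L := by gcongr; norm_num
  set w : ℂ := ((1 + 1 / L : ℝ) : ℂ) + s.im * I with hw
  have hwre : w.re = 1 + 1 / L := by simp [hw]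
  have hw1 : 1 < w.re := by linarith
  have hζw : ‖riemannZeta₁ w‖ ≤ 2 * |s.im| * (C * L) := by
    rw [riemannZeta₁_eq_sub_one_mul (ne_one_of_one_lt_re hw1), norm_mul]
    gcongr
    · have := norm_le_abs_re_add_abs_im (w - 1)
      simp only [hw, add_sub_cancel_left, sub_re, add_re, ofReal_re, one_re, re_ofReal_mul, I_re,
        mul_zero, add_zero, sub_im, add_im, ofReal_im, one_im, im_ofReal_mul, I_im, mul_one,
        zero_add, sub_zero, abs_of_pos hη] at this
      linarith
    · simpa [hwre] using hC w hw1 (by linarith)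
  refine le_of_mul_le_mul_left ?_ (zero_lt_one.trans_le him)
  calc |s.im| * ‖riemannZeta s‖ ≤ ‖s - 1‖ * ‖riemannZeta s‖ := by
        gcongr
        simpa using abs_im_le_norm (s - 1)
    _ = ‖riemannZeta₁ s‖ := by
        rw [riemannZeta₁_eq_sub_one_mul (ne_one_of_one_lt_re hs1), norm_mul]
    _ ≤ C' * ‖riemannZeta₁ w‖ := hC' s hs1 hnear.le
    _ ≤ C' * (2 * |s.im| * (C * L)) := by gcongr
    _ = |s.im| * (C * C' * 2 * L) := by ring

lemma two_le_log_ten : 2 ≤ Real.log 10 := by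
  rw [Real.le_log_iff_exp_le (by norm_num), show (2 : ℝ) = 1 + 1 by norm_num, Real.exp_add]
  nlinarith [Real.exp_one_lt_d9, Real.exp_pos 1]

lemma logLogHeight_le_four_mul_log_log {t : ℝ} (ht : 10 ≤ |t|) :
    logLogHeight t ≤ 4 * Real.log (Real.log |t|) := by
  have hlog : 2 ≤ Real.log |t| := two_le_log_ten.trans (Real.log_le_log (by norm_num) ht)
  have hshift : Real.log (5 + |t|) ≤ 2 * Real.log |t| := by
    calc Real.log (5 + |t|) ≤ Real.log (2 * |t|) := Real.log_le_log (by linarith) (by linarith)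
      _ = Real.log 2 + Real.log |t| := Real.log_mul (by norm_num) (by linarith)
      _ ≤ 2 * Real.log |t| := by linarith [Real.log_two_lt_d9]
  have hloglog : Real.log (Real.log (5 + |t|)) ≤ Real.log 2 + Real.log (Real.log |t|) := by
    rw [← Real.log_mul (by norm_num) (by linarith)]
    exact Real.log_le_log (Real.log_pos (by linarith)) hshift
  have htwo : Real.log 2 ≤ Real.log (Real.log |t|) := Real.log_le_log (by norm_num) hlog
  rw [logLogHeight]
  linarith [Real.log_two_gt_d9]

end ZetaNearOne

lemma exists_nat_eq_of_riemannZeta_eq_zero_of_re_nonpos {s : ℂ} (hζ : riemannZeta s = 0)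
    (hs : s.re ≤ 0) : ∃ n : ℕ, s = -2 * (n + 1) := by
  have hs0 : s ≠ 0 := by
    rintro rfl
    norm_num [riemannZeta_zero] at hζ
  have hre : 0 < (1 - s).re := by simpa using hs.trans_lt one_pos
  have hfun := riemannZeta_one_sub (s := 1 - s)
    (fun n hn ↦ by rw [hn] at hre; simp at hre; linarith [(n.cast_nonneg : (0 : ℝ) ≤ n)])
    (by simpa using hs0)
  rw [sub_sub_cancel, hζ] at hfun
  have hcos : Complex.cos (π * (1 - s) / 2) = 0 := by
    have hpi : (2 * (π : ℂ)) ≠ 0 := by simp [Real.pi_ne_zero]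
    have hζ' := riemannZeta_ne_zero_of_one_le_re (s := 1 - s) (by simpa using hs)
    simpa [hζ', Complex.Gamma_ne_zero_of_re_pos hre, hpi, cpow_eq_zero_iff] using hfun.symm
  obtain ⟨k, hk⟩ := Complex.cos_eq_zero_iff.1 hcos
  have hsk : s = -(2 * k) := by
    have := mul_left_cancel₀ (ofReal_ne_zero.2 Real.pi_ne_zero)
      (show (π : ℂ) * (1 - s) = π * (2 * k + 1) by linear_combination 2 * hk)
    linear_combination -this
  have hk0 : 0 < k := by
    refine lt_of_le_of_ne ?_ fun h ↦ hs0 (by simp [hsk, ← h])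
    rw [hsk] at hs
    simpa using hs
  obtain ⟨n, rfl⟩ : ∃ n : ℕ, k = n + 1 := ⟨(k - 1).toNat, by omega⟩
  exact ⟨n, by rw [hsk]; push_cast; ring⟩

lemma riemannHypothesis_of_dirichletRH_one {q : ℕ} [NeZero q]
    (hRH : dirichletRH (1 : DirichletCharacter ℂ q)) : RiemannHypothesis := by
  intro s hs htriv hs1
  have hlt : s.re < 1 := not_le.1 fun h ↦ riemannZeta_ne_zero_of_one_le_re h hs
  have hpos : 0 < s.re := not_le.1 fun h ↦
    htriv (exists_nat_eq_of_riemannZeta_eq_zero_of_re_nonpos hs h)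
  exact hRH s hpos hlt
    ((DirichletCharacter.LFunctionTrivChar_eq_mul_riemannZeta hs1).trans (by rw [hs, mul_zero]))

section PrimeSums

lemma sum_primesLE_div_mul_log_le (N : ℕ) :
    ∑ p ∈ N.primesLE, ((N / p : ℕ) : ℝ) * Real.log p ≤ N * Real.log N := by
  have hpow : ∀ p ∈ N.primesLE, p ^ (N / p) ∣ N.factorial := by
    intro p hp
    rw [(Nat.prime_of_mem_primesLE hp).pow_dvd_factorial_iff (b := Nat.log p N + 2) (by omega)]
    simpa using Finset.single_le_sum (f := fun i ↦ N / p ^ i) (fun _ _ ↦ Nat.zero_le _)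
      (mem_Ico.2 ⟨le_rfl, by omega⟩ : 1 ∈ Ico 1 (Nat.log p N + 2))
  have hdvd : ∏ p ∈ N.primesLE, p ^ (N / p) ∣ N.factorial := by
    refine Finset.prod_dvd_of_isRelPrime (fun p hp r hr hpr ↦ ?_) hpow
    exact Nat.coprime_iff_isRelPrime.1 (Nat.coprime_pow_primes _ _ (Nat.prime_of_mem_primesLE hp)
      (Nat.prime_of_mem_primesLE hr) hpr)
  have hpos : 0 < ∏ p ∈ N.primesLE, p ^ (N / p) :=
    prod_pos fun p hp ↦ pow_pos (Nat.prime_of_mem_primesLE hp).pos _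
  calc ∑ p ∈ N.primesLE, ((N / p : ℕ) : ℝ) * Real.log p
      = Real.log ((∏ p ∈ N.primesLE, p ^ (N / p) : ℕ) : ℝ) := by
        rw [Nat.cast_prod, Real.log_prod fun p hp ↦ ?_]
        · simp only [Nat.cast_pow, Real.log_pow]
        · exact_mod_cast (pow_pos (Nat.prime_of_mem_primesLE hp).pos _).ne'
    _ ≤ Real.log ((N ^ N : ℕ) : ℝ) := Real.log_le_log (by exact_mod_cast hpos)
        (by exact_mod_cast (Nat.le_of_dvd N.factorial_pos hdvd).trans N.factorial_le_pow)
    _ = N * Real.log N := by rw [Nat.cast_pow, Real.log_pow]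

lemma sum_primesLE_log_div_le (N : ℕ) :
    ∑ p ∈ N.primesLE, Real.log p / p ≤ 2 * Real.log N := by
  rcases Nat.eq_zero_or_pos N with rfl | hN
  · simp
  have hfloor : ∀ p ∈ N.primesLE,
      N * (Real.log p / p) ≤ 2 * (((N / p : ℕ) : ℝ) * Real.log p) := by
    intro p hp
    obtain ⟨hpN, hp⟩ := Nat.mem_primesLE.1 hp
    have hdiv : N ≤ 2 * (N / p) * p := by
      nlinarith [(Nat.one_le_div_iff hp.pos).2 hpN, Nat.div_add_mod N p, Nat.mod_lt N hp.pos]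
    have hp0 : (0 : ℝ) < p := by exact_mod_cast hp.pos
    have hdiv' : (N : ℝ) ≤ 2 * ((N / p : ℕ) : ℝ) * p := by exact_mod_cast hdiv
    rw [← mul_div_assoc, div_le_iff₀ hp0]
    nlinarith [Real.log_natCast_nonneg p]
  have hsum := sum_le_sum hfloor
  rw [← mul_sum, ← mul_sum] at hsum
  refine le_of_mul_le_mul_left ?_ (Nat.cast_pos.2 hN : (0 : ℝ) < N)
  linarith [sum_primesLE_div_mul_log_le N]

lemma sum_one_div_prime_le_of_le_pow {S : Finset ℕ} {y z : ℝ} {m : ℕ} (hy : 1 < y)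
    (hz : z ≤ y ^ m) (hS : ∀ p ∈ S, p.Prime ∧ y < p ∧ (p : ℝ) ≤ z) :
    ∑ p ∈ S, 1 / (p : ℝ) ≤ 2 * m := by
  have hlog := Real.log_pos hy
  rcases S.eq_empty_or_nonempty with rfl | ⟨p₀, hp₀⟩
  · simp
  have hz1 : 1 ≤ z := by linarith [(hS p₀ hp₀).2.1, (hS p₀ hp₀).2.2]
  have hfloor : 0 < ⌊z⌋₊ := Nat.floor_pos.2 hz1
  refine le_of_mul_le_mul_left ?_ hlog
  calc Real.log y * ∑ p ∈ S, 1 / (p : ℝ) ≤ ∑ p ∈ S, Real.log p / p := by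
        rw [mul_sum]
        refine sum_le_sum fun p hp ↦ ?_
        rw [mul_one_div]
        gcongr
        exact (hS p hp).2.1.le
    _ ≤ ∑ p ∈ ⌊z⌋₊.primesLE, Real.log p / p :=
        sum_le_sum_of_subset_of_nonneg
          (fun p hp ↦ Nat.mem_primesLE.2 ⟨Nat.le_floor (hS p hp).2.2, (hS p hp).1⟩)
          fun p _ _ ↦ div_nonneg (Real.log_natCast_nonneg p) p.cast_nonneg
    _ ≤ 2 * Real.log ⌊z⌋₊ := sum_primesLE_log_div_le _
    _ ≤ 2 * Real.log (y ^ m) := by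
        gcongr
        exact (Nat.floor_le (by linarith)).trans hz
    _ = Real.log y * (2 * m) := by rw [Real.log_pow]; ring

end PrimeSums

section PrimeZeta

/-- The prime zeta function `P(s) = ∑_p p ^ (-s)`, used for `1 < Re s`. -/
noncomputable def primeZeta (s : ℂ) : ℂ := ∑' p : Nat.Primes, (p : ℂ) ^ (-s)

lemma norm_prime_cpow_neg (p : Nat.Primes) (s : ℂ) : ‖(p : ℂ) ^ (-s)‖ = (p : ℝ) ^ (-s.re) :=
  Complex.norm_natCast_cpow_of_pos p.2.pos _

lemma summable_prime_cpow_neg {s : ℂ} (hs : 1 < s.re) :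
    Summable fun p : Nat.Primes ↦ (p : ℂ) ^ (-s) := by
  refine Summable.of_norm ?_
  simpa only [norm_prime_cpow_neg] using Nat.Primes.summable_rpow.2 (by linarith)

lemma re_primeZeta_ofReal {x : ℝ} (hx : 1 < x) :
    (primeZeta x).re = ∑' p : Nat.Primes, (p : ℝ) ^ (-x) := by
  rw [primeZeta, Complex.re_tsum (L := SummationFilter.unconditional _)
    (summable_prime_cpow_neg (by simpa using hx))]
  refine tsum_congr fun p ↦ ?_
  rw [← ofReal_neg, ← ofReal_natCast, ← ofReal_cpow (Nat.cast_nonneg _), ofReal_re]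

lemma norm_neg_log_one_sub_sub_le {z : ℂ} (hz : ‖z‖ ≤ 1 / 2) :
    ‖-Complex.log (1 - z) - z‖ ≤ ‖z‖ ^ 2 := by
  have h := norm_log_one_add_sub_self_le (z := -z) (by rw [norm_neg]; linarith)
  have hinv : (1 - ‖z‖)⁻¹ ≤ 2 := by
    rw [inv_le_comm₀ (by linarith) (by norm_num)]
    linarith
  rw [← sub_eq_add_neg, sub_neg_eq_add, norm_neg, ← norm_neg, neg_add, ← sub_eq_add_neg] at h
  nlinarith [sq_nonneg ‖z‖]

lemma exists_exp_re_primeZeta_le : ∃ C : ℝ, 1 ≤ C ∧ ∀ s : ℂ, 1 < s.re →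
    Real.exp (primeZeta s).re ≤ C * ‖riemannZeta s‖ := by
  have hsum2 : Summable fun p : Nat.Primes ↦ (p : ℝ) ^ (-2 : ℝ) :=
    Nat.Primes.summable_rpow.2 (by norm_num)
  refine ⟨Real.exp (∑' p : Nat.Primes, (p : ℝ) ^ (-2 : ℝ)),
    Real.one_le_exp_iff.2 (tsum_nonneg fun p ↦ by positivity), fun s hs ↦ ?_⟩
  rw [← riemannZeta_eulerProduct_exp_log hs, Complex.norm_exp, ← Real.exp_add, Real.exp_le_exp]
  set d : Nat.Primes → ℂ := fun p ↦ -Complex.log (1 - (p : ℂ) ^ (-s)) - (p : ℂ) ^ (-s) with hd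
  have hbound : ∀ p, ‖d p‖ ≤ (p : ℝ) ^ (-2 : ℝ) := by
    intro p
    have hp2 : (2 : ℝ) ≤ (p : ℕ) := by exact_mod_cast p.2.two_le
    have hnorm : ‖(p : ℂ) ^ (-s)‖ ≤ (p : ℝ)⁻¹ := by
      rw [norm_prime_cpow_neg, ← Real.rpow_neg_one]
      exact Real.rpow_le_rpow_of_exponent_le (by linarith) (by linarith)
    have hhalf : (p : ℝ)⁻¹ ≤ 1 / 2 := by
      rw [one_div]
      exact inv_anti₀ two_pos hp2
    calc ‖d p‖ ≤ ‖(p : ℂ) ^ (-s)‖ ^ 2 := norm_neg_log_one_sub_sub_le (hnorm.trans hhalf)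
      _ ≤ (p : ℝ)⁻¹ ^ 2 := by gcongr
      _ = (p : ℝ) ^ (-2 : ℝ) := by
          rw [Real.rpow_neg (by positivity), inv_pow, ← Real.rpow_natCast]
          norm_num
  have hsplit : ∑' p : Nat.Primes, -Complex.log (1 - (p : ℂ) ^ (-s)) =
      ∑' p, d p + primeZeta s := by
    rw [primeZeta, ← (Summable.of_norm_bounded hsum2 hbound).tsum_add (summable_prime_cpow_neg hs)]
    simp only [hd, sub_add_cancel]
  rw [hsplit, add_re]
  linarith [(abs_le.1 ((abs_re_le_norm (∑' p, d p)).trans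
    (tsum_of_norm_bounded hsum2.hasSum hbound))).1]

lemma sum_le_tsum_primes {S : Finset ℕ} {f : ℕ → ℝ} (hS : ∀ p ∈ S, p.Prime) (hf : ∀ p, 0 ≤ f p)
    (hsum : Summable fun p : Nat.Primes ↦ f p) : ∑ p ∈ S, f p ≤ ∑' p : Nat.Primes, f p := by
  rw [← filter_true_of_mem hS, ← sum_subtype_eq_sum_filter]
  exact (fun T : Finset Nat.Primes ↦ hsum.sum_le_tsum T fun p _ ↦ hf p) (S.subtype Nat.Prime)

lemma exists_exp_primeZeta_one_add_le : ∃ C : ℝ, 1 ≤ C ∧ ∀ δ : ℝ, 0 < δ → δ ≤ 1 →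
    Real.exp (primeZeta ((1 + δ : ℝ) : ℂ)).re ≤ C / δ := by
  obtain ⟨C₁, hC₁, hP⟩ := exists_exp_re_primeZeta_le
  obtain ⟨C₂, hC₂, hζ⟩ := exists_norm_riemannZeta_le_div_re_sub_one
  refine ⟨C₁ * C₂, one_le_mul_of_one_le_of_one_le hC₁ hC₂, fun δ hδ hδ1 ↦ ?_⟩
  have hre : 1 < ((1 + δ : ℝ) : ℂ).re := by simpa using hδ
  have h := hζ _ hre (by rw [ofReal_re]; linarith)
  rw [ofReal_re, add_sub_cancel_left] at h
  rw [mul_div_assoc]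
  exact (hP _ hre).trans (by gcongr)

-- Rankin's trick: `p⁻¹ ≤ 3 p ^ (-(1 + δ))` for `p ≤ x` when `δ = 1 / log x`, since `e < 3`.
lemma exists_sum_one_div_prime_le : ∃ C : ℝ, 0 ≤ C ∧ ∀ x : ℝ, Real.exp 1 ≤ x → ∀ S : Finset ℕ,
    (∀ p ∈ S, p.Prime ∧ (p : ℝ) ≤ x) →
      ∑ p ∈ S, 1 / (p : ℝ) ≤ 3 * Real.log (Real.log x) + C := by
  obtain ⟨C, hC, hP⟩ := exists_exp_primeZeta_one_add_le
  refine ⟨3 * Real.log C, by have := Real.log_nonneg hC; positivity, fun x hx S hS ↦ ?_⟩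
  have hx0 : 0 < x := (Real.exp_pos 1).trans_le hx
  have hlogx : 1 ≤ Real.log x := by rwa [Real.le_log_iff_exp_le hx0]
  set δ := 1 / Real.log x with hδ
  have hδ0 : 0 < δ := by positivity
  have hrankin : ∀ p ∈ S, 1 / (p : ℝ) ≤ 3 * (p : ℝ) ^ (-(1 + δ)) := by
    intro p hp
    have hp0 : (0 : ℝ) < p := by exact_mod_cast (hS p hp).1.pos
    have hpow : (p : ℝ) ^ δ ≤ 3 := by
      have hlog : Real.log p * δ ≤ 1 := by
        rw [hδ, mul_one_div, div_le_one (by linarith)]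
        exact Real.log_le_log hp0 (hS p hp).2
      rw [Real.rpow_def_of_pos hp0]
      exact (Real.exp_le_exp.2 hlog).trans (by linarith [Real.exp_one_lt_d9])
    rw [Real.rpow_neg hp0.le, Real.rpow_add hp0, Real.rpow_one, ← div_eq_mul_inv, div_le_div_iff₀
      hp0 (by positivity), one_mul, mul_comm]
    gcongr
  have hPz : (primeZeta ((1 + δ : ℝ) : ℂ)).re ≤ Real.log C + Real.log (Real.log x) := by
    rw [← Real.log_mul (by positivity) (by positivity), Real.le_log_iff_exp_le (by positivity)]
    refine (hP δ hδ0 (div_le_one_of_le₀ hlogx (by linarith))).trans_eq ?_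
    rw [hδ, div_div_eq_mul_div, div_one]
  calc ∑ p ∈ S, 1 / (p : ℝ) ≤ ∑ p ∈ S, 3 * (p : ℝ) ^ (-(1 + δ)) := sum_le_sum hrankin
    _ = 3 * ∑ p ∈ S, (p : ℝ) ^ (-(1 + δ)) := by rw [mul_sum]
    _ ≤ 3 * (primeZeta ((1 + δ : ℝ) : ℂ)).re := by
        rw [re_primeZeta_ofReal (by linarith)]
        gcongr
        exact sum_le_tsum_primes (f := fun p ↦ (p : ℝ) ^ (-(1 + δ))) (fun p hp ↦ (hS p hp).1)
          (fun p ↦ by positivity) (Nat.Primes.summable_rpow.2 (by linarith))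
    _ ≤ 3 * Real.log (Real.log x) + 3 * Real.log C := by linarith

end PrimeZeta

section ShiftProducts

lemma gfun_nonneg (q : ℕ) {x : ℝ} (hx : 0 ≤ x) : 0 ≤ gfun q x := by
  unfold gfun
  split_ifs with hlarge hsmall
  · exact Real.log_natCast_nonneg q
  · positivity
  · have hheight := logLogHeight_le_four_mul_log_log (t := x) (by rw [abs_of_nonneg hx]; linarith)
    rw [abs_of_nonneg hx] at hheight
    linarith [one_le_logLogHeight x]

lemma gfun_zero {q : ℕ} (hq : 0 < Real.log q) : gfun q 0 = Real.log q :=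
  if_pos (.inl (by positivity))

lemma exists_norm_riemannZeta_le_gfun (hRH : RiemannHypothesis) :
    ∃ C : ℝ, 1 ≤ C ∧ ∀ (q : ℕ) (s : ℂ), 0 < Real.log q → 1 + 1 / Real.log q ≤ s.re →
      s.re ≤ 2 → ‖riemannZeta s‖ ≤ C * gfun q |s.im| := by
  obtain ⟨C₁, hC₁, hreal⟩ := exists_norm_riemannZeta_le_div_re_sub_one
  obtain ⟨C₂, hC₂, hsmall⟩ := exists_norm_riemannZeta_le_div_norm_sub_one 10
  obtain ⟨C₃, hC₃, hlarge⟩ := exists_norm_riemannZeta_le_logLogHeight hRH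
  refine ⟨C₁ + C₂ + 4 * C₃, by linarith, fun q s hq hs hs2 ↦ ?_⟩
  have hs1 : 1 < s.re := (lt_add_of_pos_right 1 (by positivity)).trans_le hs
  unfold gfun
  split_ifs with htiny hbdd
  · calc ‖riemannZeta s‖ ≤ C₁ / (s.re - 1) := hreal s hs1 hs2
      _ ≤ C₁ / (1 / Real.log q) := by gcongr; linarith
      _ = C₁ * Real.log q := by rw [div_div_eq_mul_div, div_one]
      _ ≤ (C₁ + C₂ + 4 * C₃) * Real.log q := by gcongr; linarith
  · have him0 : 0 < |s.im| :=
      lt_trans (by positivity) (not_le.1 fun h ↦ htiny (.inl h))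
    calc ‖riemannZeta s‖ ≤ C₂ / ‖s - 1‖ := hsmall s hs1 hs2 hbdd
      _ ≤ C₂ / |s.im| := by gcongr; simpa using abs_im_le_norm (s - 1)
      _ = C₂ * (1 / |s.im|) := by rw [mul_one_div]
      _ ≤ (C₁ + C₂ + 4 * C₃) * (1 / |s.im|) := by gcongr; linarith
  · have hcmp := logLogHeight_le_four_mul_log_log (t := s.im) (by linarith)
    have hpos := one_le_logLogHeight s.im
    calc ‖riemannZeta s‖ ≤ C₃ * logLogHeight s.im := hlarge s hs1 hs2 (by linarith)
      _ ≤ C₃ * (4 * Real.log (Real.log |s.im|)) := by gcongr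
      _ ≤ (C₁ + C₂ + 4 * C₃) * Real.log (Real.log |s.im|) := by
          nlinarith [mul_nonneg (by linarith : 0 ≤ C₁ + C₂)
            (by linarith : 0 ≤ Real.log (Real.log |s.im|))]

variable {ι : Type*} [Fintype ι] {a : ι → ℝ}

/-- The function `n ↦ (1/2) ∑ⱼ aⱼ n ^ (-i tⱼ)`, called `h` in the statement. -/
noncomputable def shiftCoeff (a t : ι → ℝ) (n : ℕ) : ℂ :=
  (1 / 2) * ∑ j, (a j : ℂ) * (n : ℂ) ^ (-(t j) * I)

lemma normSq_shiftCoeff (a t : ι → ℝ) {n : ℕ} (hn : n ≠ 0) :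
    ‖shiftCoeff a t n‖ ^ 2 =
      ∑ i, ∑ j, a i * a j / 4 * ((n : ℂ) ^ (-((t i - t j : ℝ) * I))).re := by
  have hn0 : (n : ℂ) ≠ 0 := Nat.cast_ne_zero.2 hn
  have hconj : ∀ j, (starRingEnd ℂ) ((n : ℂ) ^ (-(t j) * I)) = (n : ℂ) ^ (t j * I) := by
    intro j
    have h := cpow_conj (n : ℂ) (-(t j) * I) (by rw [natCast_arg]; exact Real.pi_pos.ne)
    rw [conj_natCast] at h
    rw [← h]
    simp
  have hterm : ∀ i j, (n : ℂ) ^ (-((t i - t j : ℝ) * I)) =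
      (n : ℂ) ^ (-(t i) * I) * (n : ℂ) ^ (t j * I) := fun i j ↦ by
    rw [← cpow_add _ _ hn0]
    push_cast
    ring_nf
  have hcomplex : ((‖shiftCoeff a t n‖ ^ 2 : ℝ) : ℂ) =
      ∑ i, ∑ j, ((a i * a j / 4 : ℝ) : ℂ) * (n : ℂ) ^ (-((t i - t j : ℝ) * I)) := by
    rw [ofReal_pow, ← Complex.mul_conj', shiftCoeff, map_mul, map_sum, mul_mul_mul_comm,
      sum_mul_sum, mul_sum]
    refine sum_congr rfl fun i _ ↦ ?_
    rw [mul_sum]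
    refine sum_congr rfl fun j _ ↦ ?_
    rw [hterm, map_mul, hconj, conj_ofReal]
    simp only [map_div₀, map_one, map_ofNat, ofReal_div, ofReal_mul, ofReal_ofNat]
    ring
  simpa only [ofReal_re, re_sum, re_ofReal_mul] using congrArg Complex.re hcomplex

lemma sum_normSq_shiftCoeff_le (a t : ι → ℝ) {δ : ℝ} (hδ : 0 < δ) {S : Finset ℕ}
    (hS : ∀ p ∈ S, p.Prime) :
    ∑ p ∈ S, ‖shiftCoeff a t p‖ ^ 2 * (p : ℝ) ^ (-(1 + δ)) ≤
      ∑ i, ∑ j, a i * a j / 4 * (primeZeta (((1 + δ : ℝ) : ℂ) + (t i - t j : ℝ) * I)).re := by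
  have hterm : ∀ p : Nat.Primes, ‖shiftCoeff a t p‖ ^ 2 * (p : ℝ) ^ (-(1 + δ)) =
      ∑ i, ∑ j, a i * a j / 4 *
        ((p : ℂ) ^ (-(((1 + δ : ℝ) : ℂ) + (t i - t j : ℝ) * I))).re := by
    intro p
    rw [normSq_shiftCoeff a t p.2.ne_zero, sum_mul]
    refine sum_congr rfl fun i _ ↦ ?_
    rw [sum_mul]
    refine sum_congr rfl fun j _ ↦ ?_
    rw [neg_add (((1 + δ : ℝ)) : ℂ), cpow_add _ _ (Nat.cast_ne_zero.2 p.2.ne_zero), ← ofReal_neg,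
      ← ofReal_natCast (p : ℕ), ← ofReal_cpow (Nat.cast_nonneg _), re_ofReal_mul]
    ring
  have hsum : HasSum (fun p : Nat.Primes ↦ ‖shiftCoeff a t p‖ ^ 2 * (p : ℝ) ^ (-(1 + δ)))
      (∑ i, ∑ j, a i * a j / 4 *
        (primeZeta (((1 + δ : ℝ) : ℂ) + (t i - t j : ℝ) * I)).re) := by
    simp_rw [hterm]
    exact hasSum_sum fun i _ ↦ hasSum_sum fun j _ ↦ (Complex.hasSum_re
      (summable_prime_cpow_neg (by simpa using hδ)).hasSum).mul_left _
  rw [← hsum.tsum_eq]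
  exact sum_le_tsum_primes (f := fun p ↦ ‖shiftCoeff a t p‖ ^ 2 * (p : ℝ) ^ (-(1 + δ))) hS
    (fun p ↦ by positivity) hsum.summable

variable [LinearOrder ι]

lemma prod_prod_eq_prod_diag_mul_prod_lt_sq {M : Type*} [CommMonoid M] {F : ι → ι → M}
    (hF : ∀ i j, F i j = F j i) :
    ∏ i, ∏ j, F i j = (∏ i, F i i) * ∏ i, ∏ j, if i < j then F i j ^ 2 else 1 := by
  have hsplit : ∀ i j, F i j = (if i = j then F i j else 1) *
      ((if i < j then F i j else 1) * (if j < i then F i j else 1)) := by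
    intro i j
    rcases lt_trichotomy i j with h | rfl | h
    · simp [h, h.ne, h.not_gt]
    · simp
    · simp [h, h.ne', h.not_gt]
  have hswap : ∏ i, ∏ j, (if j < i then F i j else 1) = ∏ i, ∏ j, if i < j then F i j else 1 := by
    rw [prod_comm]
    simp_rw [hF]
  calc ∏ i, ∏ j, F i j = ∏ i, ∏ j, ((if i = j then F i j else 1) *
        ((if i < j then F i j else 1) * (if j < i then F i j else 1))) :=
        prod_congr rfl fun i _ ↦ prod_congr rfl fun j _ ↦ hsplit i j
    _ = (∏ i, F i i) * ((∏ i, ∏ j, if i < j then F i j else 1) *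
          ∏ i, ∏ j, if i < j then F i j else 1) := by
        simp_rw [prod_mul_distrib, hswap, prod_ite_eq, mem_univ, if_true]
    _ = _ := by
        simp_rw [← prod_mul_distrib, ite_mul_ite, one_mul, ← sq]

/-- The factor `(log q) ^ (∑ aⱼ² / 4) ∏_{i < j} g(|tᵢ - tⱼ|) ^ (aᵢ aⱼ / 2)` of the main bound. -/
noncomputable def shiftProduct (q : ℕ) (a t : ι → ℝ) : ℝ :=
  Real.log q ^ ((∑ j, a j ^ 2) / 4) *
    ∏ i, ∏ j, if i < j then gfun q |t i - t j| ^ (a i * a j / 2) else 1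

lemma prod_prod_gfun_rpow (a t : ι → ℝ) {q : ℕ} (hq : 0 < Real.log q) :
    ∏ i, ∏ j, gfun q |t i - t j| ^ (a i * a j / 4) = shiftProduct q a t := by
  rw [prod_prod_eq_prod_diag_mul_prod_lt_sq fun i j ↦ by rw [abs_sub_comm, mul_comm], shiftProduct]
  congr 1
  · simp_rw [sub_self, abs_zero, gfun_zero hq]
    rw [← Real.rpow_sum_of_pos hq, sum_div]
    simp_rw [sq]
  · refine prod_congr rfl fun i _ ↦ prod_congr rfl fun j _ ↦ ?_
    split_ifs
    · rw [← Real.rpow_mul_natCast (gfun_nonneg _ (abs_nonneg _))]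
      congr 1
      push_cast
      ring
    · rfl

lemma exists_exp_sum_normSq_shiftCoeff_le (hRH : RiemannHypothesis) (ha : ∀ j, 0 ≤ a j) :
    ∃ C : ℝ, 1 ≤ C ∧ ∀ (q : ℕ) (t : ι → ℝ) (δ : ℝ), 0 < Real.log q → 1 / Real.log q ≤ δ → δ ≤ 1 →
      ∀ S : Finset ℕ, (∀ p ∈ S, p.Prime) →
        Real.exp (∑ p ∈ S, ‖shiftCoeff a t p‖ ^ 2 * (p : ℝ) ^ (-(1 + δ))) ≤
          C * shiftProduct q a t := by
  obtain ⟨C₁, hC₁, hζ⟩ := exists_norm_riemannZeta_le_gfun hRH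
  obtain ⟨C₂, hC₂, hP⟩ := exists_exp_re_primeZeta_le
  have ha' : ∀ i j, 0 ≤ a i * a j / 4 := fun i j ↦ by have := ha i; have := ha j; positivity
  have hC : 1 ≤ C₂ * C₁ := one_le_mul_of_one_le_of_one_le hC₂ hC₁
  refine ⟨∏ i, ∏ j, (C₂ * C₁) ^ (a i * a j / 4), one_le_prod fun i _ ↦ one_le_prod fun j _ ↦
    Real.one_le_rpow hC (ha' i j), fun q t δ hq hδ hδ1 S hS ↦ ?_⟩
  have hδ0 : 0 < δ := lt_of_lt_of_le (by positivity) hδ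
  set s : ι → ι → ℂ := fun i j ↦ ((1 + δ : ℝ) : ℂ) + (t i - t j : ℝ) * I
  have hfactor : ∀ i j, Real.exp (primeZeta (s i j)).re ≤ C₂ * C₁ * gfun q |t i - t j| := by
    intro i j
    have hre : (s i j).re = 1 + δ := by simp [s]
    have him : (s i j).im = t i - t j := by simp [s]
    have hζij := hζ q (s i j) hq (by linarith) (by linarith)
    rw [him] at hζij
    rw [mul_assoc]
    exact (hP _ (by linarith)).trans (by gcongr)
  calc Real.exp (∑ p ∈ S, ‖shiftCoeff a t p‖ ^ 2 * (p : ℝ) ^ (-(1 + δ)))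
      ≤ Real.exp (∑ i, ∑ j, a i * a j / 4 * (primeZeta (s i j)).re) :=
        Real.exp_le_exp.2 (sum_normSq_shiftCoeff_le a t hδ0 hS)
    _ = ∏ i, ∏ j, Real.exp (primeZeta (s i j)).re ^ (a i * a j / 4) := by
        simp_rw [Real.exp_sum, ← Real.exp_mul, mul_comm]
    _ ≤ ∏ i, ∏ j, (C₂ * C₁ * gfun q |t i - t j|) ^ (a i * a j / 4) := by
        gcongr with i _ j _
        exacts [ha' i j, hfactor i j]
    _ = (∏ i, ∏ j, (C₂ * C₁) ^ (a i * a j / 4)) * shiftProduct q a t := by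
        simp_rw [Real.mul_rpow (zero_le_one.trans hC) (gfun_nonneg q (abs_nonneg _)),
          prod_mul_distrib, ← prod_prod_gfun_rpow a t hq]

end ShiftProducts

section RandomModel

open scoped ComplexConjugate

variable {N : ℕ} [NeZero N]

/-- The `N`-th roots of unity model for the values of a random completely multiplicative function at
`n`: on the probability space `S → ZMod N`, the values at the primes of `S` are independent and
uniform among the `N`-th roots of unity, and the values at all other primes are `1`. -/
noncomputable def modelChar (N : ℕ) [NeZero N] (S : Finset ℕ) (n : ℕ) :
    AddChar (S → ZMod N) ℂ :=
  ∏ p : S, ZMod.stdAddChar.compAddMonoidHom (Pi.evalAddMonoidHom (fun _ ↦ ZMod N) p) ^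
    n.factorization p

variable {S : Finset ℕ} {m n : ℕ}

lemma modelChar_one : modelChar N S 1 = 1 := by
  simp [modelChar]

lemma modelChar_mul (hm : m ≠ 0) (hn : n ≠ 0) :
    modelChar N S (m * n) = modelChar N S m * modelChar N S n := by
  simp_rw [modelChar, Nat.factorization_mul hm hn, Finsupp.add_apply, pow_add, prod_mul_distrib]

lemma modelChar_prime_pow (hS : ∀ p ∈ S, p.Prime) (p : S) (k : ℕ) (ω : S → ZMod N) :
    modelChar N S (p ^ k) ω = ZMod.stdAddChar (ω p * (k : ZMod N)) := by
  rw [modelChar, AddChar.prod_apply, prod_eq_single p]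
  · rw [(hS p p.2).factorization_pow, Finsupp.single_eq_same, AddChar.pow_apply,
      AddChar.compAddMonoidHom_apply, Pi.evalAddMonoidHom_apply, mul_comm, ← nsmul_eq_mul,
      AddChar.map_nsmul_eq_pow]
  · intro r _ hr
    rw [(hS p p.2).factorization_pow, Finsupp.single_eq_of_ne (Subtype.coe_injective.ne hr),
      pow_zero, AddChar.one_apply]
  · simp

lemma re_sum_modelChar_mul_conj_nonneg :
    0 ≤ (∑ ω, modelChar N S m ω * conj (modelChar N S n ω)).re := by
  have h := AddChar.sum_eq_ite (modelChar N S m * (modelChar N S n)⁻¹)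
  simp_rw [AddChar.mul_apply, AddChar.inv_apply', AddChar.inv_apply_eq_conj] at h
  rw [h]
  split_ifs
  · rw [natCast_re]
    positivity
  · rw [zero_re]

lemma sum_modelChar_mul_conj_self :
    ∑ ω, modelChar N S n ω * conj (modelChar N S n ω) = Fintype.card (S → ZMod N) := by
  simp_rw [← AddChar.inv_apply_eq_conj, ← AddChar.inv_apply', ← AddChar.mul_apply,
    mul_inv_cancel, AddChar.one_apply]
  simp

lemma norm_sum_dirichletCharacter_mul_conj_le {q : ℕ} [NeZero q] (hm : m < q) (hn : n < q) :
    ‖∑ χ : DirichletCharacter ℂ q, χ m * conj (χ n)‖ ≤ if m = n then (q.totient : ℝ) else 0 := by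
  by_cases hu : IsUnit (n : ZMod q)
  · have hconj : ∀ χ : DirichletCharacter ℂ q, χ m * conj (χ n) = χ (n : ZMod q)⁻¹ * χ m := by
      intro χ
      have hmul : χ n * χ (n : ZMod q)⁻¹ = 1 := by
        rw [← map_mul, ZMod.mul_inv_of_unit _ hu, map_one]
      have hnorm : ‖χ n‖ = 1 := by simpa using χ.unit_norm_eq_one hu.unit
      rw [mul_comm, eq_inv_of_mul_eq_one_right hmul, Complex.inv_eq_conj hnorm]
    have hcast : (n : ZMod q) = m ↔ m = n := by
      rw [ZMod.natCast_eq_natCast_iff', Nat.mod_eq_of_lt hm, Nat.mod_eq_of_lt hn, eq_comm]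
    simp_rw [hconj, DirichletCharacter.sum_char_inv_mul_char_eq ℂ hu, hcast]
    split_ifs <;> simp
  · have hzero : ∀ χ : DirichletCharacter ℂ q, χ m * conj (χ n) = 0 := fun χ ↦ by
      rw [χ.map_nonunit hu, map_zero, mul_zero]
    rw [sum_congr rfl fun χ _ ↦ hzero χ, sum_const_zero, norm_zero]
    positivity

variable {q : ℕ}

/-- `CharMajorant N q S L f g` says that `f` is a finite combination of the functions
`χ ↦ χ m * conj (χ n)` with `1 ≤ m, n ≤ L`, and that `g` is the same combination of the
corresponding functions of the random model, with each coefficient replaced by an upper bound for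
its absolute value. Terms whose coefficient in `f` vanishes may have arbitrary `m` and `n`. It
allows moments over characters to be bounded by moments of the model. -/
inductive CharMajorant (N : ℕ) [NeZero N] (q : ℕ) (S : Finset ℕ) :
    ℝ → (DirichletCharacter ℂ q → ℂ) → ((S → ZMod N) → ℂ) → Prop
  | monomial (L : ℝ) (m n : ℕ) (w : ℂ) (w' : ℝ) (hm : m ≠ 0) (hn : n ≠ 0) (hw : ‖w‖ ≤ w')
      (hL : w = 0 ∨ ((m : ℝ) ≤ L ∧ (n : ℝ) ≤ L)) :
      CharMajorant N q S L (fun χ ↦ w * (χ m * conj (χ n)))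
        (fun ω ↦ (w' : ℂ) * (modelChar N S m ω * conj (modelChar N S n ω)))
  | add (L : ℝ) (f f' : DirichletCharacter ℂ q → ℂ) (g g' : (S → ZMod N) → ℂ)
      (h : CharMajorant N q S L f g) (h' : CharMajorant N q S L f' g') :
      CharMajorant N q S L (fun χ ↦ f χ + f' χ) (fun ω ↦ g ω + g' ω)

namespace CharMajorant

variable {L L' : ℝ} {f f' : DirichletCharacter ℂ q → ℂ} {g g' : (S → ZMod N) → ℂ} {κ : Type*}

lemma mono_length (h : CharMajorant N q S L f g) (hL : L ≤ L') : CharMajorant N q S L' f g := by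
  induction h with
  | monomial m n w w' hm hn hw hmn =>
    exact monomial L' m n w w' hm hn hw (hmn.imp_right fun h ↦ ⟨h.1.trans hL, h.2.trans hL⟩)
  | add _ _ _ _ _ _ ih ih' => exact add _ _ _ _ _ ih ih'

lemma zero_left (h : CharMajorant N q S L f g) (L' : ℝ) :
    CharMajorant N q S L' (fun _ ↦ 0) g := by
  induction h with
  | monomial m n w w' hm hn hw _ =>
    simpa using monomial (q := q) (S := S) (N := N) L' m n 0 w' hm hn
      (by simpa using (norm_nonneg w).trans hw) (.inl rfl)
  | add _ _ _ _ _ _ ih ih' => simpa using add _ _ _ _ _ ih ih'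

lemma const (hL : 1 ≤ L) {w : ℂ} {w' : ℝ} (hw : ‖w‖ ≤ w') :
    CharMajorant N q S L (fun _ ↦ w) (fun _ ↦ (w' : ℂ)) := by
  simpa [modelChar_one] using monomial (q := q) (S := S) (N := N) L 1 1 w w' one_ne_zero one_ne_zero
    hw (.inr (by simpa using hL))

lemma mul (h : CharMajorant N q S L f g) (h' : CharMajorant N q S L' f' g') :
    CharMajorant N q S (L * L') (fun χ ↦ f χ * f' χ) (fun ω ↦ g ω * g' ω) := by
  induction h with
  | monomial m n w w' hm hn hw hmn =>
    induction h' with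
    | monomial m' n' v v' hm' hn' hv hmn' =>
      have hprod := monomial (q := q) (S := S) (N := N) (L * L') (m * m') (n * n') (w * v) (w' * v')
        (mul_ne_zero hm hm') (mul_ne_zero hn hn')
        (by rw [norm_mul]; exact mul_le_mul hw hv (norm_nonneg v) ((norm_nonneg w).trans hw)) ?_
      · convert! hprod using 1
        · ext χ
          simp only [Nat.cast_mul, map_mul]
          ring
        · ext ω
          simp only [modelChar_mul hm hm', modelChar_mul hn hn', AddChar.mul_apply, map_mul,
            ofReal_mul]
          ring
      · rcases hmn with rfl | ⟨hmL, hnL⟩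
        · exact .inl (zero_mul v)
        rcases hmn' with rfl | ⟨hmL', hnL'⟩
        · exact .inl (mul_zero w)
        push_cast
        exact .inr ⟨mul_le_mul hmL hmL' m'.cast_nonneg (m.cast_nonneg.trans hmL),
          mul_le_mul hnL hnL' n'.cast_nonneg (n.cast_nonneg.trans hnL)⟩
    | add f₁ f₂ g₁ g₂ _ _ ih₁ ih₂ => simpa only [mul_add] using add _ _ _ _ _ ih₁ ih₂
  | add f₁ f₂ g₁ g₂ _ _ ih₁ ih₂ => simpa only [add_mul] using add _ _ _ _ _ ih₁ ih₂

lemma pow (h : CharMajorant N q S L f g) (j : ℕ) :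
    CharMajorant N q S (L ^ j) (fun χ ↦ f χ ^ j) (fun ω ↦ g ω ^ j) := by
  induction j with
  | zero => simpa using const (q := q) (S := S) (N := N) le_rfl (w := 1) (w' := 1) (by simp)
  | succ j ih =>
    simp_rw [pow_succ]
    exact ih.mul h

lemma sum (s : Finset κ) {f : κ → DirichletCharacter ℂ q → ℂ} {g : κ → (S → ZMod N) → ℂ}
    (h : ∀ i ∈ s, CharMajorant N q S L (f i) (g i)) :
    CharMajorant N q S L (fun χ ↦ ∑ i ∈ s, f i χ) (fun ω ↦ ∑ i ∈ s, g i ω) := by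
  induction s using Finset.cons_induction with
  | empty =>
    simpa using monomial (q := q) (S := S) (N := N) L 1 1 0 0 one_ne_zero one_ne_zero (by simp)
      (.inl rfl)
  | cons i s hi ih =>
    simp_rw [sum_cons]
    exact add _ _ _ _ _ (h i (mem_cons_self i s)) (ih fun j hj ↦ h j (mem_cons_of_mem hj))

lemma prod (s : Finset κ) {L : κ → ℝ} {f : κ → DirichletCharacter ℂ q → ℂ}
    {g : κ → (S → ZMod N) → ℂ} (h : ∀ i ∈ s, CharMajorant N q S (L i) (f i) (g i)) :
    CharMajorant N q S (∏ i ∈ s, L i) (fun χ ↦ ∏ i ∈ s, f i χ) (fun ω ↦ ∏ i ∈ s, g i ω) := by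
  induction s using Finset.cons_induction with
  | empty => simpa using const (q := q) (S := S) (N := N) le_rfl (w := 1) (w' := 1) (by simp)
  | cons i s hi ih =>
    simp_rw [prod_cons]
    exact (h i (mem_cons_self i s)).mul (ih fun j hj ↦ h j (mem_cons_of_mem hj))

lemma re_mul_char (hL : 1 ≤ L) (hn : n ≠ 0) (hnL : (n : ℝ) ≤ L) (c : ℂ) :
    CharMajorant N q S L (fun χ ↦ ((c * χ n).re : ℂ))
      (fun ω ↦ ((‖c‖ * (modelChar N S n ω).re : ℝ) : ℂ)) := by
  have h := add _ _ _ _ _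
    (monomial (q := q) (S := S) (N := N) L n 1 (c / 2) (‖c‖ / 2) hn one_ne_zero (by simp)
      (.inr ⟨hnL, by simpa using hL⟩))
    (monomial (q := q) (S := S) (N := N) L 1 n (conj c / 2) (‖c‖ / 2) one_ne_zero hn (by simp)
      (.inr ⟨by simpa using hL, hnL⟩))
  convert! h using 1
  · ext χ
    simp only [re_eq_add_conj, map_mul, Nat.cast_one, map_one]
    ring
  · ext ω
    simp only [ofReal_mul, re_eq_add_conj, modelChar_one, AddChar.one_apply, map_one, ofReal_div,
      ofReal_ofNat]
    ring

theorem norm_sum_mul_card_le [NeZero q] (h : CharMajorant N q S L f g) (hL : L < q) :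
    ‖∑ χ, f χ‖ * Fintype.card (S → ZMod N) ≤ q.totient * (∑ ω, g ω).re := by
  induction h with
  | monomial m n w w' _ _ hw hmn =>
    have hw' : 0 ≤ w' := (norm_nonneg w).trans hw
    rw [← mul_sum, ← mul_sum, norm_mul, re_ofReal_mul]
    have hmodel := re_sum_modelChar_mul_conj_nonneg (N := N) (S := S) (m := m) (n := n)
    rcases hmn with rfl | ⟨hmL, hnL⟩
    · rw [norm_zero, zero_mul, zero_mul]
      positivity
    have horth := norm_sum_dirichletCharacter_mul_conj_le (q := q)
      (by exact_mod_cast hmL.trans_lt hL) (by exact_mod_cast hnL.trans_lt hL)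
    split_ifs at horth with hmn
    · subst hmn
      rw [sum_modelChar_mul_conj_self, natCast_re, mul_left_comm, ← mul_assoc]
      gcongr
    · rw [horth.antisymm (norm_nonneg _), mul_zero, zero_mul]
      positivity
  | add f f' g g' _ _ ih ih' =>
    simp_rw [sum_add_distrib, add_re, mul_add]
    calc ‖∑ χ, f χ + ∑ χ, f' χ‖ * Fintype.card (S → ZMod N)
        ≤ (‖∑ χ, f χ‖ + ‖∑ χ, f' χ‖) * Fintype.card (S → ZMod N) := by
          gcongr
          exact norm_add_le _ _
      _ ≤ q.totient * (∑ ω, g ω).re + q.totient * (∑ ω, g' ω).re := by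
          rw [add_mul]
          exact add_le_add ih ih'

end CharMajorant

end RandomModel

section TruncatedExponential

/-- The Taylor polynomial `∑ j < J, x ^ j / j!` of the exponential function. -/
noncomputable def truncExp {𝕜 : Type*} [Field 𝕜] (J : ℕ) (x : 𝕜) : 𝕜 :=
  ∑ j ∈ range J, x ^ j / (j.factorial : 𝕜)

lemma ofReal_truncExp (J : ℕ) (x : ℝ) : ((truncExp J x : ℝ) : ℂ) = truncExp J (x : ℂ) := by
  simp [truncExp]

lemma tendsto_truncExp (x : ℂ) :
    Filter.Tendsto (fun J ↦ truncExp J x) Filter.atTop (nhds (cexp x)) := by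
  rw [Complex.exp_eq_exp_ℂ]
  exact (NormedSpace.expSeries_div_hasSum_exp x).tendsto_sum_nat

lemma exp_sub_truncExp_le {r y : ℝ} (hr : 1 ≤ r) (hy : 0 ≤ y) (J : ℕ) :
    Real.exp y - truncExp J y ≤ Real.exp (r * y) / r ^ J := by
  have hexp : ∀ x : ℝ, HasSum (fun j : ℕ ↦ x ^ j / (j.factorial : ℝ)) (Real.exp x) := fun x ↦ by
    rw [Real.exp_eq_exp_ℝ]
    exact NormedSpace.expSeries_div_hasSum_exp x
  have hpartial := sum_le_hasSum (range J) (fun j hj ↦ ?_)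
    (((hexp (r * y)).div_const (r ^ J)).sub (hexp y))
  · rw [sum_sub_distrib] at hpartial
    have hnonneg : 0 ≤ ∑ j ∈ range J, (r * y) ^ j / (j.factorial : ℝ) / r ^ J :=
      sum_nonneg fun j _ ↦ by positivity
    unfold truncExp
    linarith
  · have hJj : r ^ J ≤ r ^ j := pow_le_pow_right₀ hr (by simpa using hj)
    rw [sub_nonneg, mul_pow, div_right_comm]
    gcongr
    rw [le_div_iff₀ (by positivity), mul_comm]
    gcongr

lemma abs_exp_sub_truncExp_le (x : ℝ) (J : ℕ) :
    |Real.exp x - truncExp J x| ≤ Real.exp |x| - truncExp J |x| := by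
  have h := norm_exp_sub_sum_le_exp_norm_sub_sum (x : ℂ) J
  have hreal : cexp x - ∑ m ∈ range J, (x : ℂ) ^ m / m.factorial =
      ((Real.exp x - truncExp J x : ℝ) : ℂ) := by
    simp [truncExp]
  rwa [hreal, norm_real, norm_real] at h

lemma exp_div_twenty_pow_le {J : ℕ} (hJ : J ≠ 0) :
    Real.exp J / 20 ^ J ≤ Real.exp (-J) / 2 * Real.exp (-(J / 20)) := by
  have hten : Real.exp (41 / 20) ≤ 10 := by
    rw [← pow_le_pow_iff_left₀ (Real.exp_pos _).le (by norm_num) (by norm_num : 20 ≠ 0),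
      ← Real.exp_nat_mul]
    calc Real.exp ((20 : ℕ) * (41 / 20)) = Real.exp 1 ^ 41 := by
          rw [← Real.exp_nat_mul]
          norm_num
      _ ≤ 2.8 ^ 41 := by
          gcongr
          linarith [Real.exp_one_lt_d9]
      _ ≤ 10 ^ 20 := by norm_num
  have hsplit : Real.exp J =
      Real.exp (-J) * Real.exp (-(J / 20)) * Real.exp (41 / 20) ^ J := by
    rw [← Real.exp_nat_mul, ← Real.exp_add, ← Real.exp_add]
    congr 1
    ring
  have hhalf : Real.exp (41 / 20) ^ J / 20 ^ J ≤ 1 / 2 := by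
    rw [← div_pow]
    calc (Real.exp (41 / 20) / 20) ^ J ≤ (1 / 2) ^ J := by
          gcongr ?_ ^ J
          linarith
      _ ≤ 1 / 2 := pow_le_of_le_one (by norm_num) (by norm_num) hJ
  rw [hsplit, mul_div_assoc]
  calc Real.exp (-J) * Real.exp (-(J / 20)) * (Real.exp (41 / 20) ^ J / 20 ^ J)
      ≤ Real.exp (-J) * Real.exp (-(J / 20)) * (1 / 2) := by gcongr
    _ = Real.exp (-J) / 2 * Real.exp (-(J / 20)) := by ring

lemma exp_le_mul_truncExp {x : ℝ} {J : ℕ} (hJ : J ≠ 0) (hx : |x| ≤ J / 20) :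
    Real.exp x ≤ (1 + Real.exp (-J)) * truncExp J x := by
  have htail : Real.exp |x| - truncExp J |x| ≤ Real.exp (-J) / 2 * Real.exp x :=
    calc Real.exp |x| - truncExp J |x|
        ≤ Real.exp (20 * |x|) / 20 ^ J := exp_sub_truncExp_le (by norm_num) (abs_nonneg x) J
      _ ≤ Real.exp J / 20 ^ J := by
          gcongr
          linarith
      _ ≤ Real.exp (-J) / 2 * Real.exp (-(J / 20)) := exp_div_twenty_pow_le hJ
      _ ≤ Real.exp (-J) / 2 * Real.exp x := by
          gcongr
          exact (abs_le.1 hx).1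
  have hlower : (1 - Real.exp (-J) / 2) * Real.exp x ≤ truncExp J x := by
    linarith [(abs_le.1 ((abs_exp_sub_truncExp_le x J).trans htail)).2]
  have hle : Real.exp (-J : ℝ) ≤ 1 := Real.exp_le_one_iff.2 (by simp)
  have hpos := Real.exp_pos (-J : ℝ)
  calc Real.exp x ≤ (1 + Real.exp (-J)) * (1 - Real.exp (-J) / 2) * Real.exp x :=
        le_mul_of_one_le_left (Real.exp_pos x).le (by nlinarith)
    _ ≤ (1 + Real.exp (-J)) * truncExp J x := by
        rw [mul_assoc]
        gcongr

variable {N : ℕ} [NeZero N] {q : ℕ} {S : Finset ℕ}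

lemma CharMajorant.truncExp {L : ℝ} {f : DirichletCharacter ℂ q → ℂ} {g : (S → ZMod N) → ℂ}
    (hL : 1 ≤ L) (h : CharMajorant N q S L f g) {J J' : ℕ} (hJ : J ≤ J') :
    CharMajorant N q S (L ^ J) (fun χ ↦ truncExp J (f χ)) (fun ω ↦ truncExp J' (g ω)) := by
  have hextend : ∀ x : ℂ, _root_.truncExp J x =
      ∑ j ∈ range J', if j < J then x ^ j / (j.factorial : ℂ) else 0 := by
    intro x
    rw [← sum_filter, _root_.truncExp]
    congr 1
    ext j
    simp only [mem_range, mem_filter]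
    omega
  simp_rw [hextend]
  refine .sum _ fun j _ ↦ ?_
  have hterm : CharMajorant N q S (L ^ j) (fun χ ↦ f χ ^ j / (j.factorial : ℂ))
      (fun ω ↦ g ω ^ j / (j.factorial : ℂ)) := by
    simpa [div_eq_mul_inv] using (h.pow j).mul (.const (w := (j.factorial : ℂ)⁻¹)
      (w' := (j.factorial : ℝ)⁻¹) le_rfl (by simp))
  split_ifs with hj
  · exact hterm.mono_length (pow_le_pow_right₀ hL hj.le)
  · exact hterm.zero_left _

theorem norm_sum_prod_truncExp_sq_mul_card_le [NeZero q] {κ : Type*} (s : Finset κ) {L : κ → ℝ}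
    {J : κ → ℕ} {f : κ → DirichletCharacter ℂ q → ℂ} {g : κ → (S → ZMod N) → ℂ}
    (hL : ∀ i ∈ s, 1 ≤ L i) (h : ∀ i ∈ s, CharMajorant N q S (L i) (f i) (g i))
    (hq : ∏ i ∈ s, (L i ^ J i) ^ 2 < q) :
    ‖∑ χ, ∏ i ∈ s, truncExp (J i) (f i χ) ^ 2‖ * Fintype.card (S → ZMod N) ≤
      q.totient * (∑ ω, ∏ i ∈ s, cexp (g i ω) ^ 2).re := by
  have hlim : Filter.Tendsto
      (fun K ↦ (q.totient : ℝ) * (∑ ω, ∏ i ∈ s, truncExp K (g i ω) ^ 2).re) Filter.atTop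
      (nhds (q.totient * (∑ ω, ∏ i ∈ s, cexp (g i ω) ^ 2).re)) :=
    ((continuous_re.tendsto _).comp (tendsto_finsetSum _ fun ω _ ↦ tendsto_finsetProd _ fun i _ ↦
      (tendsto_truncExp _).pow 2)).const_mul _
  refine ge_of_tendsto hlim ?_
  filter_upwards [Filter.eventually_ge_atTop (s.sup J)] with K hK
  exact (CharMajorant.prod s fun i hi ↦
    ((h i hi).truncExp (hL i hi) ((le_sup hi).trans hK)).pow 2).norm_sum_mul_card_le hq

end TruncatedExponential

section ModelMoment

/-- The character `x ↦ cos (2 π x / N)` of `ZMod N`, the real part of a uniform `N`-th root of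
unity in the random model. -/
noncomputable def zmodCos {N : ℕ} [NeZero N] (x : ZMod N) : ℝ := (ZMod.stdAddChar x : ℂ).re

variable {N : ℕ} [NeZero N]

lemma ofReal_zmodCos (x : ZMod N) :
    (zmodCos x : ℂ) = (ZMod.stdAddChar x + ZMod.stdAddChar (-x)) / 2 := by
  rw [AddChar.map_neg_eq_conj, zmodCos, re_eq_add_conj]

lemma abs_zmodCos_le_one (x : ZMod N) : |zmodCos x| ≤ 1 :=
  (abs_re_le_norm _).trans_eq (AddChar.norm_apply _ x)

lemma zmodCos_mul_zmodCos (x y : ZMod N) :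
    zmodCos x * zmodCos y = (zmodCos (x + y) + zmodCos (x - y)) / 2 := by
  rw [← ofReal_inj]
  push_cast
  simp only [ofReal_zmodCos, sub_eq_add_neg, neg_add, neg_neg, AddChar.map_add_eq_mul]
  ring

lemma sum_zmodCos_mul (b : ZMod N) : ∑ x, zmodCos (x * b) = if b = 0 then (N : ℝ) else 0 := by
  have h := congrArg Complex.re (AddChar.sum_mulShift (ψ := (ZMod.stdAddChar : AddChar (ZMod N) ℂ))
    b (ZMod.isPrimitive_stdAddChar N))
  rw [re_sum, ZMod.card] at h
  refine h.trans ?_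
  split_ifs <;> simp

lemma sum_zmodCos_mul_zmodCos (b c : ZMod N) :
    ∑ x, zmodCos (x * b) * zmodCos (x * c) =
      ((if b + c = 0 then (N : ℝ) else 0) + if b = c then (N : ℝ) else 0) / 2 := by
  simp_rw [zmodCos_mul_zmodCos, ← mul_add, ← mul_sub, ← sum_div, sum_add_distrib, sum_zmodCos_mul,
    sub_eq_zero]

lemma exp_le_quadratic_add {y Y : ℝ} (hy : |y| ≤ Y) :
    Real.exp y ≤ 1 + y + y ^ 2 / 2 + Y ^ 3 * Real.exp Y := by
  have hY : 0 ≤ Y := (abs_nonneg y).trans hy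
  have h := norm_exp_sub_sum_le_norm_mul_exp (y : ℂ) 3
  have hreal : cexp y - ∑ m ∈ range 3, (y : ℂ) ^ m / m.factorial =
      ((Real.exp y - (1 + y + y ^ 2 / 2) : ℝ) : ℂ) := by
    simp [sum_range_succ]
  rw [hreal, norm_real, norm_real, Real.norm_eq_abs, Real.norm_eq_abs] at h
  have hmono : |y| ^ 3 * Real.exp |y| ≤ Y ^ 3 * Real.exp Y := by gcongr
  linarith [(abs_le.1 h).2]

/-- The bound for the logarithm of the mean of `exp (2 Re (u X + v X ^ 2))` over a random root of
unity `X`: the variance term `u ^ 2 + v ^ 2` plus a third-order Taylor remainder. -/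
noncomputable def primeWeight (u v : ℝ) : ℝ :=
  u ^ 2 + v ^ 2 + (2 * (u + v)) ^ 3 * Real.exp (2 * (u + v))

-- Fifth roots of unity suffice: the first two moments only involve frequencies `b` and `b ± c` with
-- `b, c ∈ {1, 2}`, and among these only `b - b` vanishes modulo `5`.
lemma sum_zmodCos_add_zmodCos_mul_two (u v : ℝ) :
    ∑ x : ZMod 5, (u * zmodCos x + v * zmodCos (x * 2)) = 0 := by
  have h₁ := sum_zmodCos_mul (1 : ZMod 5)
  have h₂ := sum_zmodCos_mul (2 : ZMod 5)
  rw [if_neg (by decide)] at h₁ h₂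
  simp_rw [mul_one] at h₁
  rw [sum_add_distrib, ← mul_sum, ← mul_sum, h₁, h₂, mul_zero, mul_zero, add_zero]

lemma sum_sq_zmodCos_add_zmodCos_mul_two (u v : ℝ) :
    ∑ x : ZMod 5, (u * zmodCos x + v * zmodCos (x * 2)) ^ 2 = 5 / 2 * (u ^ 2 + v ^ 2) := by
  have h₁₁ := sum_zmodCos_mul_zmodCos (1 : ZMod 5) 1
  have h₁₂ := sum_zmodCos_mul_zmodCos (1 : ZMod 5) 2
  have h₂₂ := sum_zmodCos_mul_zmodCos (2 : ZMod 5) 2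
  rw [if_neg (by decide), if_pos rfl] at h₁₁ h₂₂
  rw [if_neg (by decide), if_neg (by decide)] at h₁₂
  simp_rw [mul_one] at h₁₁ h₁₂
  calc ∑ x : ZMod 5, (u * zmodCos x + v * zmodCos (x * 2)) ^ 2
      = u ^ 2 * ∑ x : ZMod 5, zmodCos x * zmodCos x +
        2 * u * v * ∑ x : ZMod 5, zmodCos x * zmodCos (x * 2) +
        v ^ 2 * ∑ x : ZMod 5, zmodCos (x * 2) * zmodCos (x * 2) := by
        simp_rw [mul_sum, ← sum_add_distrib]
        exact sum_congr rfl fun x _ ↦ by ring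
    _ = 5 / 2 * (u ^ 2 + v ^ 2) := by
        rw [h₁₁, h₁₂, h₂₂]
        push_cast
        ring

lemma sum_exp_zmodCos_le {u v : ℝ} (hu : 0 ≤ u) (hv : 0 ≤ v) :
    ∑ x : ZMod 5, Real.exp (2 * (u * zmodCos x + v * zmodCos (x * 2))) ≤
      5 * Real.exp (primeWeight u v) := by
  set y : ZMod 5 → ℝ := fun x ↦ u * zmodCos x + v * zmodCos (x * 2) with hy
  set Y := 2 * (u + v) with hY
  have hbound : ∀ x, |2 * y x| ≤ Y := by
    intro x
    have h₁ := abs_le.1 (abs_zmodCos_le_one x)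
    have h₂ := abs_le.1 (abs_zmodCos_le_one (x * 2))
    rw [abs_le]
    constructor <;> simp only [hy] <;> nlinarith
  calc ∑ x, Real.exp (2 * y x)
      ≤ ∑ x, (1 + 2 * y x + (2 * y x) ^ 2 / 2 + Y ^ 3 * Real.exp Y) :=
        sum_le_sum fun x _ ↦ exp_le_quadratic_add (hbound x)
    _ = 5 * (1 + Y ^ 3 * Real.exp Y) + 2 * ∑ x, y x + 2 * ∑ x, y x ^ 2 := by
        simp_rw [mul_pow, sum_add_distrib, ← sum_div, ← mul_sum, sum_const, card_univ, ZMod.card,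
          nsmul_eq_mul]
        push_cast
        ring
    _ = 5 * (primeWeight u v + 1) := by
        simp_rw [hy, sum_zmodCos_add_zmodCos_mul_two, sum_sq_zmodCos_add_zmodCos_mul_two,
          primeWeight, ← hY]
        ring
    _ ≤ 5 * Real.exp (primeWeight u v) := by
        gcongr
        exact Real.add_one_le_exp _

lemma sum_exp_sum_zmodCos_le {S : Finset ℕ} {u v : ℕ → ℝ} (hu : ∀ p, 0 ≤ u p)
    (hv : ∀ p, 0 ≤ v p) :
    ∑ ω : S → ZMod 5,
        Real.exp (2 * ∑ p : S, (u p * zmodCos (ω p) + v p * zmodCos (ω p * 2))) ≤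
      Fintype.card (S → ZMod 5) * Real.exp (∑ p ∈ S, primeWeight (u p) (v p)) :=
  calc ∑ ω : S → ZMod 5,
        Real.exp (2 * ∑ p : S, (u p * zmodCos (ω p) + v p * zmodCos (ω p * 2)))
      = ∑ ω : S → ZMod 5, ∏ p : S,
          Real.exp (2 * (u p * zmodCos (ω p) + v p * zmodCos (ω p * 2))) := by
        simp_rw [mul_sum, Real.exp_sum]
    _ = ∏ p : S, ∑ x : ZMod 5, Real.exp (2 * (u p * zmodCos x + v p * zmodCos (x * 2))) := by
        rw [prod_univ_sum, Fintype.piFinset_univ]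
    _ ≤ ∏ p : S, 5 * Real.exp (primeWeight (u p) (v p)) := by
        gcongr with p _
        exact sum_exp_zmodCos_le (hu p) (hv p)
    _ = Fintype.card (S → ZMod 5) * Real.exp (∑ p ∈ S, primeWeight (u p) (v p)) := by
        rw [prod_mul_distrib, ← Real.exp_sum, sum_coe_sort S fun p ↦ primeWeight (u p) (v p)]
        simp [ZMod.card]

variable {q : ℕ}

/-- The real part of `∑ p ∈ B, (c p * χ p + d p * χ p ^ 2)`. -/
noncomputable def rePrimeSum (c d : ℕ → ℂ) (B : Finset ℕ) (χ : DirichletCharacter ℂ q) : ℝ :=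
  ∑ p ∈ B, (c p * χ p + d p * χ ((p : ZMod q) ^ 2)).re

lemma rePrimeSum_biUnion {κ : Type*} {s : Finset κ} {B : κ → Finset ℕ}
    (hB : (s : Set κ).PairwiseDisjoint B) (c d : ℕ → ℂ) (χ : DirichletCharacter ℂ q) :
    rePrimeSum c d (s.biUnion B) χ = ∑ i ∈ s, rePrimeSum c d (B i) χ :=
  sum_biUnion hB

/-- The counterpart of `rePrimeSum` in the random model of `5`-th roots of unity, with the
coefficients replaced by their absolute values. -/
noncomputable def modelPrimeSum (c d : ℕ → ℂ) (S B : Finset ℕ) (ω : S → ZMod 5) : ℝ :=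
  ∑ p ∈ B, (‖c p‖ * (modelChar 5 S p ω).re + ‖d p‖ * (modelChar 5 S (p ^ 2) ω).re)

lemma charMajorant_rePrimeSum {S B : Finset ℕ} {L : ℝ} (hL : 1 ≤ L) (c d : ℕ → ℂ)
    (hB : ∀ p ∈ B, p ≠ 0 ∧ (p : ℝ) ^ 2 ≤ L) :
    CharMajorant 5 q S L (fun χ ↦ (rePrimeSum c d B χ : ℂ))
      (fun ω ↦ (modelPrimeSum c d S B ω : ℂ)) := by
  simp_rw [rePrimeSum, modelPrimeSum, add_re, ofReal_sum, ofReal_add]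
  refine .sum B fun p hp ↦ ?_
  obtain ⟨hp0, hpL⟩ := hB p hp
  have hp1 : (1 : ℝ) ≤ p := by exact_mod_cast Nat.one_le_iff_ne_zero.2 hp0
  refine .add _ _ _ _ _ (.re_mul_char hL hp0 (by nlinarith) (c p)) ?_
  simpa using CharMajorant.re_mul_char (N := 5) (q := q) (S := S) hL (pow_ne_zero 2 hp0)
    (by simpa using hpL) (d p)

lemma sum_exp_modelPrimeSum_le {S : Finset ℕ} (hS : ∀ p ∈ S, p.Prime) (c d : ℕ → ℂ) :
    ∑ ω : S → ZMod 5, Real.exp (2 * modelPrimeSum c d S S ω) ≤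
      Fintype.card (S → ZMod 5) * Real.exp (∑ p ∈ S, primeWeight ‖c p‖ ‖d p‖) := by
  have hmodel : ∀ ω : S → ZMod 5, modelPrimeSum c d S S ω =
      ∑ p : S, (‖c p‖ * zmodCos (ω p) + ‖d p‖ * zmodCos (ω p * 2)) := by
    intro ω
    rw [modelPrimeSum, ← sum_coe_sort S]
    refine sum_congr rfl fun p _ ↦ ?_
    have h₁ : modelChar 5 S p ω = ZMod.stdAddChar (ω p) := by
      simpa using modelChar_prime_pow hS p 1 ω
    have h₂ : modelChar 5 S (p ^ 2) ω = ZMod.stdAddChar (ω p * 2) :=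
      modelChar_prime_pow hS p 2 ω
    simp only [h₁, h₂, zmodCos]
  simp_rw [hmodel]
  exact sum_exp_sum_zmodCos_le (u := fun p ↦ ‖c p‖) (v := fun p ↦ ‖d p‖)
    (fun p ↦ norm_nonneg _) fun p ↦ norm_nonneg _

variable [NeZero q] {κ : Type*} {s : Finset κ} {B : κ → Finset ℕ} {L : κ → ℝ} {J : κ → ℕ}

theorem sum_prod_truncExp_rePrimeSum_sq_le (c d : ℕ → ℂ) (hprime : ∀ i ∈ s, ∀ p ∈ B i, p.Prime)
    (hB : (s : Set κ).PairwiseDisjoint B) (hL : ∀ i ∈ s, 1 ≤ L i)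
    (hBL : ∀ i ∈ s, ∀ p ∈ B i, (p : ℝ) ^ 2 ≤ L i) (hq : ∏ i ∈ s, (L i ^ J i) ^ 2 < q) :
    ∑ χ : DirichletCharacter ℂ q, ∏ i ∈ s, truncExp (J i) (rePrimeSum c d (B i) χ) ^ 2 ≤
      q.totient * Real.exp (∑ p ∈ s.biUnion B, primeWeight ‖c p‖ ‖d p‖) := by
  set S := s.biUnion B
  have hSprime : ∀ p ∈ S, p.Prime := fun p hp ↦ by
    obtain ⟨i, hi, hpi⟩ := mem_biUnion.1 hp
    exact hprime i hi p hpi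
  have hmoment := norm_sum_prod_truncExp_sq_mul_card_le s hL
    (fun i hi ↦ charMajorant_rePrimeSum (q := q) (S := S) (hL i hi) c d
      fun p hp ↦ ⟨(hprime i hi p hp).ne_zero, hBL i hi p hp⟩) hq
  have hmodel : ∀ ω : S → ZMod 5, ∏ i ∈ s, cexp (modelPrimeSum c d S (B i) ω : ℂ) ^ 2 =
      (Real.exp (2 * modelPrimeSum c d S S ω) : ℂ) := by
    intro ω
    have hsum : modelPrimeSum c d S S ω = ∑ i ∈ s, modelPrimeSum c d S (B i) ω := sum_biUnion hB
    rw [prod_pow, ← Complex.exp_sum, ← Complex.exp_nat_mul, hsum]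
    push_cast
    rfl
  simp_rw [hmodel, ← ofReal_truncExp, ← ofReal_pow, ← ofReal_prod, ← ofReal_sum, norm_real,
    ofReal_re] at hmoment
  have hcard : (0 : ℝ) < Fintype.card (S → ZMod 5) := by exact_mod_cast Fintype.card_pos
  refine le_of_mul_le_mul_right ?_ hcard
  calc _ ≤ _ := (mul_le_mul_of_nonneg_right (Real.le_norm_self _) hcard.le).trans hmoment
    _ ≤ q.totient * (Fintype.card (S → ZMod 5) *
          Real.exp (∑ p ∈ S, primeWeight ‖c p‖ ‖d p‖)) := by
        gcongr
        exact sum_exp_modelPrimeSum_le hSprime c d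
    _ = _ := by ring

theorem sum_exp_two_mul_rePrimeSum_le (c d : ℕ → ℂ) (hprime : ∀ i ∈ s, ∀ p ∈ B i, p.Prime)
    (hB : (s : Set κ).PairwiseDisjoint B) (hL : ∀ i ∈ s, 1 ≤ L i)
    (hBL : ∀ i ∈ s, ∀ p ∈ B i, (p : ℝ) ^ 2 ≤ L i) (hJ : ∀ i ∈ s, J i ≠ 0)
    (hq : ∏ i ∈ s, (L i ^ J i) ^ 2 < q) {T : Finset (DirichletCharacter ℂ q)}
    (hT : ∀ χ ∈ T, ∀ i ∈ s, |rePrimeSum c d (B i) χ| ≤ J i / 20) :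
    ∑ χ ∈ T, Real.exp (2 * rePrimeSum c d (s.biUnion B) χ) ≤
      (∏ i ∈ s, (1 + Real.exp (-J i))) ^ 2 *
        (q.totient * Real.exp (∑ p ∈ s.biUnion B, primeWeight ‖c p‖ ‖d p‖)) := by
  have htrunc : ∀ χ ∈ T, Real.exp (2 * rePrimeSum c d (s.biUnion B) χ) ≤
      (∏ i ∈ s, (1 + Real.exp (-J i))) ^ 2 *
        ∏ i ∈ s, truncExp (J i) (rePrimeSum c d (B i) χ) ^ 2 := by
    intro χ hχ
    rw [rePrimeSum_biUnion hB, mul_comm, Real.exp_mul, Real.exp_sum, Real.rpow_ofNat, prod_pow,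
      ← mul_pow, ← prod_mul_distrib]
    gcongr with i hi
    exact exp_le_mul_truncExp (hJ i hi) (hT χ hχ i hi)
  calc ∑ χ ∈ T, Real.exp (2 * rePrimeSum c d (s.biUnion B) χ)
      ≤ ∑ χ ∈ T, (∏ i ∈ s, (1 + Real.exp (-J i))) ^ 2 *
          ∏ i ∈ s, truncExp (J i) (rePrimeSum c d (B i) χ) ^ 2 := sum_le_sum htrunc
    _ ≤ ∑ χ : DirichletCharacter ℂ q, (∏ i ∈ s, (1 + Real.exp (-J i))) ^ 2 *
          ∏ i ∈ s, truncExp (J i) (rePrimeSum c d (B i) χ) ^ 2 :=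
        sum_le_sum_of_subset_of_nonneg (subset_univ T) fun χ _ _ ↦ by positivity
    _ ≤ _ := by
        rw [← mul_sum]
        gcongr
        exact sum_prod_truncExp_rePrimeSum_sq_le c d hprime hB hL hBL hq

end ModelMoment

section PrimeBlocks

lemma betaSeq_zero (q : ℕ) : betaSeq q 0 = 0 := if_pos rfl

lemma betaSeq_one (q : ℕ) : betaSeq q 1 = 1 / Real.log (Real.log q) ^ 2 := by
  simp [betaSeq]

variable {q i N : ℕ}

lemma betaSeq_succ (hi : i ≠ 0) : betaSeq q (i + 1) = 20 * betaSeq q i := by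
  obtain ⟨j, rfl⟩ := Nat.exists_eq_succ_of_ne_zero hi
  simp [betaSeq, pow_succ]
  ring

lemma betaSeq_nonneg (q i : ℕ) : 0 ≤ betaSeq q i := by
  unfold betaSeq
  split_ifs <;> positivity

lemma betaSeq_pos (hq : 0 < Real.log (Real.log q)) (hi : i ≠ 0) : 0 < betaSeq q i := by
  rw [betaSeq, if_neg hi]
  positivity

lemma monotone_betaSeq (q : ℕ) : Monotone (betaSeq q) := by
  refine monotone_nat_of_le_succ fun i ↦ ?_
  rcases eq_or_ne i 0 with rfl | hi
  · exact betaSeq_zero q ▸ betaSeq_nonneg q 1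
  · linarith [betaSeq_succ (q := q) hi, betaSeq_nonneg q i]

lemma sum_betaSeq_rpow_le (q N : ℕ) :
    ∑ i ∈ Icc 1 N, betaSeq q i ^ (1 / 4 : ℝ) ≤ 2 * betaSeq q N ^ (1 / 4 : ℝ) := by
  induction N with
  | zero => simp [betaSeq_zero]
  | succ n ih =>
    rw [sum_Icc_succ_top (by lia)]
    rcases eq_or_ne n 0 with rfl | hn
    · have := Real.rpow_nonneg (betaSeq_nonneg q 1) (1 / 4)
      simpa using by linarith
    · have h20 : (2 : ℝ) ≤ 20 ^ (1 / 4 : ℝ) := by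
        rw [one_div, Real.le_rpow_inv_iff_of_pos] <;> norm_num
      have := Real.rpow_nonneg (betaSeq_nonneg q n) (1 / 4)
      rw [betaSeq_succ hn, Real.mul_rpow (by norm_num) (betaSeq_nonneg q n)]
      nlinarith

lemma bddAbove_setOf_betaSeq_le (hq : 0 < Real.log (Real.log q)) (ε : ℝ) :
    BddAbove {i : ℕ | betaSeq q i ≤ ε} := by
  obtain ⟨n, hn⟩ := pow_unbounded_of_one_lt (ε * Real.log (Real.log q) ^ 2)
    (by norm_num : (1 : ℝ) < 20)
  have hε : ε < betaSeq q (n + 1) := by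
    rwa [betaSeq, if_neg n.succ_ne_zero, Nat.add_sub_cancel, lt_div_iff₀ (by positivity)]
  exact ⟨n + 1, fun i hi ↦ ((monotone_betaSeq q).reflect_lt (hi.trans_lt hε)).le⟩

lemma lt_betaSeq_bigI (hq : 0 < Real.log (Real.log q)) (a A : ℝ) :
    Real.exp (-(10000 * a ^ 2 * (A + 1))) < betaSeq q (bigI q a A) :=
  lt_of_not_ge fun h ↦ (le_csSup (bddAbove_setOf_betaSeq_le hq _) h).not_gt
    (lt_one_add _)

lemma betaSeq_bigI_le {a A : ℝ} (hq : 0 < Real.log (Real.log q))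
    (hβ : 1 / Real.log (Real.log q) ^ 2 ≤ Real.exp (-(10000 * a ^ 2 * (A + 1)))) :
    betaSeq q (bigI q a A) ≤ 20 * Real.exp (-(10000 * a ^ 2 * (A + 1))) := by
  set s := {i : ℕ | betaSeq q i ≤ Real.exp (-(10000 * a ^ 2 * (A + 1)))}
  have hbdd : BddAbove s := bddAbove_setOf_betaSeq_le hq _
  have h1 : 1 ∈ s := (betaSeq_one q).trans_le hβ
  have hmem : betaSeq q (sSup s) ≤ _ := Nat.sSup_mem ⟨1, h1⟩ hbdd
  rw [bigI, add_comm, betaSeq_succ (Nat.one_le_iff_ne_zero.1 (le_csSup hbdd h1))]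
  gcongr

lemma exp_one_lt_of_log_log_pos (hq : 0 < Real.log (Real.log q)) : Real.exp 1 < q := by
  have hlog : 1 < Real.log q := (Real.log_pos_iff (Real.log_natCast_nonneg q)).1 hq
  have hq0 : (0 : ℝ) < q := by
    by_contra! h
    simp [h.antisymm q.cast_nonneg] at hlog
    linarith
  exact (Real.lt_log_iff_exp_lt hq0).1 hlog

/-- The primes in `(q ^ β_{i - 1}, q ^ β_i]`, which index the sum `Gfun q h i l`. -/
noncomputable def primeBlock (q i : ℕ) : Finset ℕ :=
  (Iic ⌊(q : ℝ) ^ betaSeq q i⌋₊).filter fun p ↦ p.Prime ∧ (q : ℝ) ^ betaSeq q (i - 1) < p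

lemma mem_primeBlock {p : ℕ} : p ∈ primeBlock q i ↔
    p.Prime ∧ (q : ℝ) ^ betaSeq q (i - 1) < p ∧ (p : ℝ) ≤ (q : ℝ) ^ betaSeq q i := by
  rw [primeBlock, mem_filter, mem_Iic, Nat.le_floor_iff (by positivity), and_comm, and_assoc]

lemma monotone_rpow_betaSeq (hq : 1 ≤ q) : Monotone fun i ↦ (q : ℝ) ^ betaSeq q i :=
  fun _ _ hij ↦ Real.rpow_le_rpow_of_exponent_le (mod_cast hq) (monotone_betaSeq q hij)

lemma pairwise_disjoint_primeBlock (hq : 1 ≤ q) :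
    Pairwise (Function.onFun Disjoint (primeBlock q)) := by
  refine pairwise_disjoint_on (primeBlock q) |>.2 fun i j hij ↦ disjoint_left.2 fun p hi hj ↦ ?_
  have hle := monotone_rpow_betaSeq hq (Nat.le_sub_one_of_lt hij)
  exact ((mem_primeBlock.1 hi).2.2.trans hle).not_gt (mem_primeBlock.1 hj).2.1

lemma biUnion_primeBlock (hq : 1 ≤ q) (N : ℕ) :
    (Icc 1 N).biUnion (primeBlock q) = (Iic ⌊(q : ℝ) ^ betaSeq q N⌋₊).filter Nat.Prime := by
  ext p
  simp only [mem_biUnion, mem_Icc, mem_primeBlock, mem_filter, mem_Iic,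
    Nat.le_floor_iff (by positivity : (0 : ℝ) ≤ (q : ℝ) ^ betaSeq q N)]
  refine ⟨fun ⟨i, hi, hp, _, hpi⟩ ↦ ⟨hpi.trans (monotone_rpow_betaSeq hq hi.2), hp⟩,
    fun ⟨hpN, hp⟩ ↦ ?_⟩
  have hex : ∃ i, (p : ℝ) ≤ (q : ℝ) ^ betaSeq q i := ⟨N, hpN⟩
  classical
  have hfind : Nat.find hex ≠ 0 := by
    refine (Nat.find_pos hex).2 ?_ |>.ne'
    simpa [betaSeq_zero] using hp.one_lt
  exact ⟨Nat.find hex, ⟨Nat.one_le_iff_ne_zero.2 hfind, Nat.find_min' hex hpN⟩, hp,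
    not_le.1 (Nat.find_min hex (Nat.sub_one_lt hfind)), Nat.find_spec hex⟩

lemma sum_primeBlock_succ_one_div_le (hq : 0 < Real.log (Real.log q)) (hi : i ≠ 0) :
    ∑ p ∈ primeBlock q (i + 1), 1 / (p : ℝ) ≤ 40 := by
  have hq1 : (1 : ℝ) < q := (by simp : (1 : ℝ) < Real.exp 1).trans (exp_one_lt_of_log_log_pos hq)
  have hpow : (q : ℝ) ^ betaSeq q (i + 1) = ((q : ℝ) ^ betaSeq q i) ^ 20 := by
    rw [betaSeq_succ hi, mul_comm, Real.rpow_mul (by positivity), Real.rpow_ofNat]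
  refine (sum_one_div_prime_le_of_le_pow (Real.one_lt_rpow hq1 (betaSeq_pos hq hi)) hpow.le
    fun p hp ↦ mem_primeBlock.1 hp).trans_eq ?_
  norm_num

lemma betaSeq_one_rpow (hq : 0 < Real.log (Real.log q)) :
    betaSeq q 1 ^ (-(3 / 4 : ℝ)) = Real.log (Real.log q) ^ (3 / 2 : ℝ) := by
  rw [betaSeq_one, one_div, Real.inv_rpow (by positivity), ← Real.rpow_natCast,
    ← Real.rpow_mul hq.le, ← Real.rpow_neg hq.le]
  norm_num

lemma mul_sum_primeBlock_one_div_le {C M : ℝ}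
    (hC : ∀ x, Real.exp 1 ≤ x → ∀ S : Finset ℕ, (∀ p ∈ S, p.Prime ∧ (p : ℝ) ≤ x) →
      ∑ p ∈ S, 1 / (p : ℝ) ≤ 3 * Real.log (Real.log x) + C)
    (hq : 0 < Real.log (Real.log q)) (hM : 0 ≤ M)
    (hMq : M * (3 * Real.log (Real.log q) + C) ≤ Real.log (Real.log q) ^ (3 / 2 : ℝ))
    (hβ : betaSeq q i ≤ 1) (hMβ : 40 * M ≤ betaSeq q i ^ (-(3 / 4 : ℝ))) (hi : 1 ≤ i) :
    M * ∑ p ∈ primeBlock q i, 1 / (p : ℝ) ≤ betaSeq q i ^ (-(3 / 4 : ℝ)) := by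
  have hqe := exp_one_lt_of_log_log_pos hq
  have hq1 : (1 : ℝ) < q := (by simp : (1 : ℝ) < Real.exp 1).trans hqe
  obtain rfl | ⟨j, hj, rfl⟩ : i = 1 ∨ ∃ j, j ≠ 0 ∧ i = j + 1 :=
    hi.eq_or_lt.imp Eq.symm fun h ↦ ⟨i - 1, by lia, by lia⟩
  · rw [betaSeq_one_rpow hq]
    refine (mul_le_mul_of_nonneg_left (hC q hqe.le _ fun p hp ↦ ?_) hM).trans hMq
    obtain ⟨hp, -, hpq⟩ := mem_primeBlock.1 hp
    exact ⟨hp, hpq.trans ((Real.rpow_le_rpow_of_exponent_le hq1.le hβ).trans_eq (rpow_one _))⟩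
  · linarith [mul_le_mul_of_nonneg_left (sum_primeBlock_succ_one_div_le hq hj) hM]

end PrimeBlocks

section SmoothedPrimeSums

/-- The coefficient of `χ p` in the sums `Gfun q h i N`. -/
noncomputable def smoothedCoeff (q N : ℕ) (h : ℕ → ℂ) (p : ℕ) : ℂ :=
  h p / (p : ℂ) ^ (((1 / 2 + 1 / (betaSeq q N * Real.log q) : ℝ) : ℂ)) *
    ((Real.log ((q : ℝ) ^ betaSeq q N / p) / Real.log ((q : ℝ) ^ betaSeq q N) : ℝ) : ℂ)

open Classical in
/-- The coefficient of `χ (p ^ 2)` in `reLogPolynomial`, extended by zero beyond the range of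
summation `p ≤ q ^ (β_N / 2)`. -/
noncomputable def squareCoeff (q N : ℕ) (h : ℕ → ℂ) (p : ℕ) : ℂ :=
  if (p : ℝ) ≤ (q : ℝ) ^ (betaSeq q N / 2) then (1 / 2) * (h (p ^ 2) / p) else 0

/-- The real part of the Dirichlet polynomial over primes `p ≤ q ^ β_N` and squares of primes
`p ≤ q ^ (β_N / 2)` that approximates the logarithm of the twisted product of `L`-values. -/
noncomputable def reLogPolynomial (q N : ℕ) (h : ℕ → ℂ) (χ : DirichletCharacter ℂ q) : ℝ :=
  (∑ p ∈ Finset.filter Nat.Prime (Finset.Iic ⌊(q : ℝ) ^ betaSeq q N⌋₊),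
      χ p * h p / (p : ℂ) ^ (((1 / 2 + 1 / (betaSeq q N * Real.log q) : ℝ) : ℂ)) *
        ((Real.log ((q : ℝ) ^ betaSeq q N / p) / Real.log ((q : ℝ) ^ betaSeq q N) : ℝ) : ℂ)).re +
    (1 / 2) *
      (∑ p ∈ Finset.filter Nat.Prime (Finset.Iic ⌊(q : ℝ) ^ (betaSeq q N / 2)⌋₊),
        χ ((p : ZMod q) ^ 2) * h (p ^ 2) / (p : ℂ)).re

variable {q N : ℕ} {h : ℕ → ℂ}

lemma Gfun_eq_sum_primeBlock (q : ℕ) (h : ℕ → ℂ) (i l : ℕ) (χ : DirichletCharacter ℂ q) :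
    Gfun q h i l χ = ∑ p ∈ primeBlock q i, smoothedCoeff q l h p * χ p := by
  unfold Gfun primeBlock smoothedCoeff
  exact sum_congr rfl fun p _ ↦ by ring

lemma rePrimeSum_smoothedCoeff_squareCoeff (hq : 1 ≤ q) (χ : DirichletCharacter ℂ q) :
    rePrimeSum (smoothedCoeff q N h) (squareCoeff q N h)
      ((Iic ⌊(q : ℝ) ^ betaSeq q N⌋₊).filter Nat.Prime) χ = reLogPolynomial q N h χ := by
  have hle : (q : ℝ) ^ (betaSeq q N / 2) ≤ (q : ℝ) ^ betaSeq q N :=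
    Real.rpow_le_rpow_of_exponent_le (mod_cast hq) (half_le_self (betaSeq_nonneg q N))
  have hsubset : (Iic ⌊(q : ℝ) ^ (betaSeq q N / 2)⌋₊).filter Nat.Prime ⊆
      (Iic ⌊(q : ℝ) ^ betaSeq q N⌋₊).filter Nat.Prime :=
    filter_subset_filter _ (Iic_subset_Iic.2 (Nat.floor_mono hle))
  have hmem : ∀ p, p ∈ Iic ⌊(q : ℝ) ^ (betaSeq q N / 2)⌋₊ ↔
      (p : ℝ) ≤ (q : ℝ) ^ (betaSeq q N / 2) := fun p ↦ by
    rw [mem_Iic, Nat.le_floor_iff (by positivity)]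
  simp_rw [rePrimeSum, add_re, sum_add_distrib, reLogPolynomial, re_sum, mul_sum]
  congr 1
  · refine sum_congr rfl fun p _ ↦ ?_
    rw [smoothedCoeff]
    ring_nf
  · rw [← sum_subset hsubset]
    · refine sum_congr rfl fun p hp ↦ ?_
      rw [squareCoeff, if_pos ((hmem p).1 (mem_filter.1 hp).1), ← re_ofReal_mul]
      push_cast
      ring_nf
    · intro p hp hp'
      rw [squareCoeff, if_neg fun hpq ↦ hp' (mem_filter.2 ⟨(hmem p).2 hpq, (mem_filter.1 hp).2⟩),
        zero_mul, zero_re]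

lemma abs_log_div_div_log_le_one {x y : ℝ} (hy : 1 ≤ y) (hyx : y ≤ x) :
    |Real.log (x / y) / Real.log x| ≤ 1 := by
  have hy0 : 0 < y := by linarith
  have hx0 : 0 < x := by linarith
  have hlog : 0 ≤ Real.log (x / y) := Real.log_nonneg ((one_le_div hy0).2 hyx)
  have hlogx : 0 ≤ Real.log x := Real.log_nonneg (hy.trans hyx)
  rw [abs_of_nonneg (div_nonneg hlog hlogx)]
  refine div_le_one_of_le₀ (Real.log_le_log (by positivity) (div_le_self hx0.le hy)) hlogx

lemma norm_smoothedCoeff_le (h : ℕ → ℂ) {p : ℕ} (hp : 1 ≤ p)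
    (hpq : (p : ℝ) ≤ (q : ℝ) ^ betaSeq q N) :
    ‖smoothedCoeff q N h p‖ ≤
      ‖h p‖ * (p : ℝ) ^ (-(1 / 2 + 1 / (betaSeq q N * Real.log q))) := by
  rw [smoothedCoeff, norm_mul, norm_div, norm_real, norm_natCast_cpow_of_pos hp, ofReal_re,
    Real.rpow_neg p.cast_nonneg, ← div_eq_mul_inv]
  exact mul_le_of_le_one_right (by positivity)
    (abs_log_div_div_log_le_one (by exact_mod_cast hp) hpq)

lemma norm_squareCoeff_le {M : ℝ} {p : ℕ} (hM : ‖h (p ^ 2)‖ ≤ M) :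
    ‖squareCoeff q N h p‖ ≤ M / 2 * (1 / p) := by
  have hM0 : 0 ≤ M := (norm_nonneg _).trans hM
  unfold squareCoeff
  split_ifs
  · calc ‖(1 / 2 : ℂ) * (h (p ^ 2) / p)‖ = ‖h (p ^ 2)‖ / 2 * (1 / p) := by
          rw [norm_mul, norm_div, norm_div, norm_one, Complex.norm_ofNat,
            Complex.norm_natCast]
          ring
      _ ≤ M / 2 * (1 / p) := by gcongr
  · rw [norm_zero]
    positivity

lemma abs_rePrimeSum_primeBlock_le {M : ℝ} (hM : ∀ n ≠ 0, ‖h n‖ ≤ M) (i : ℕ)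
    (χ : DirichletCharacter ℂ q) :
    |rePrimeSum (smoothedCoeff q N h) (squareCoeff q N h) (primeBlock q i) χ| ≤
      |(Gfun q h i N χ).re| + M / 2 * ∑ p ∈ primeBlock q i, 1 / (p : ℝ) := by
  have hsquare : ‖∑ p ∈ primeBlock q i, squareCoeff q N h p * χ ((p : ZMod q) ^ 2)‖ ≤
      M / 2 * ∑ p ∈ primeBlock q i, 1 / (p : ℝ) := by
    rw [mul_sum]
    refine norm_sum_le_of_le _ fun p hp ↦ ?_
    have hp0 := (mem_primeBlock.1 hp).1.ne_zero
    rw [norm_mul]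
    exact (mul_le_of_le_one_right (norm_nonneg _) (χ.norm_le_one _)).trans
      (norm_squareCoeff_le (hM _ (pow_ne_zero 2 hp0)))
  rw [rePrimeSum, ← re_sum, sum_add_distrib, ← Gfun_eq_sum_primeBlock, add_re]
  exact (abs_add_le _ _).trans (add_le_add_right ((abs_re_le_norm _).trans hsquare) _)

lemma primeWeight_le {x c d H M δ : ℝ} (hx : 1 ≤ x) (hc0 : 0 ≤ c) (hd0 : 0 ≤ d) (hH : 0 ≤ H)
    (hHM : H ≤ M) (hδ : 0 ≤ δ) (hc : c ≤ H * x ^ (-(1 / 2 + δ / 2))) (hd : d ≤ M * (1 / x)) :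
    primeWeight c d ≤
      H ^ 2 * x ^ (-(1 + δ)) + (M ^ 2 + (4 * M) ^ 3 * Real.exp (4 * M)) * x ^ (-(3 / 2) : ℝ) := by
  have hx0 : 0 < x := by linarith
  have hM : 0 ≤ M := hH.trans hHM
  have hmain : c ^ 2 ≤ H ^ 2 * x ^ (-(1 + δ)) := by
    refine (pow_le_pow_left₀ hc0 hc 2).trans_eq ?_
    rw [mul_pow, ← Real.rpow_mul_natCast hx0.le]
    congr 2
    push_cast
    ring
  set u := x ^ (-(1 / 2) : ℝ)
  have hu0 : 0 < u := by positivity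
  have hu1 : u ≤ 1 := Real.rpow_le_one_of_one_le_of_nonpos hx (by norm_num)
  have hu2 : 1 / x = u ^ 2 := by
    rw [← Real.rpow_mul_natCast hx0.le]
    norm_num [Real.rpow_neg_one]
  have hu3 : x ^ (-(3 / 2) : ℝ) = u ^ 3 := by
    rw [← Real.rpow_mul_natCast hx0.le]
    norm_num
  rw [hu2] at hd
  have hcu : c ≤ M * u := hc.trans <| mul_le_mul hHM
    (Real.rpow_le_rpow_of_exponent_le hx (by linarith)) (by positivity) hM
  have hd2 : d ^ 2 ≤ M ^ 2 * u ^ 3 :=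
    calc d ^ 2 ≤ (M * u ^ 2) ^ 2 := by gcongr
      _ = M ^ 2 * u ^ 3 * u := by ring
      _ ≤ M ^ 2 * u ^ 3 := mul_le_of_le_one_right (by positivity) hu1
  have hcd : 2 * (c + d) ≤ 4 * M * u := by
    nlinarith [mul_le_of_le_one_right (mul_nonneg hM hu0.le) hu1]
  have hcd' : 2 * (c + d) ≤ 4 * M := hcd.trans (mul_le_of_le_one_right (by positivity) hu1)
  calc primeWeight c d
      ≤ H ^ 2 * x ^ (-(1 + δ)) + M ^ 2 * u ^ 3 + (4 * M * u) ^ 3 * Real.exp (4 * M) := by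
        unfold primeWeight
        gcongr
    _ = H ^ 2 * x ^ (-(1 + δ)) + (M ^ 2 + (4 * M) ^ 3 * Real.exp (4 * M)) * x ^ (-(3 / 2) : ℝ) := by
        rw [hu3]
        ring

lemma sum_primeWeight_smoothedCoeff_squareCoeff_le {M : ℝ} (hM : ∀ n ≠ 0, ‖h n‖ ≤ M) :
    ∑ p ∈ (Iic ⌊(q : ℝ) ^ betaSeq q N⌋₊).filter Nat.Prime,
        primeWeight ‖smoothedCoeff q N h p‖ ‖squareCoeff q N h p‖ ≤
      ∑ p ∈ (Iic ⌊(q : ℝ) ^ betaSeq q N⌋₊).filter Nat.Prime,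
          ‖h p‖ ^ 2 * (p : ℝ) ^ (-(1 + 2 / (betaSeq q N * Real.log q))) +
        (M ^ 2 + (4 * M) ^ 3 * Real.exp (4 * M)) *
          ∑' p : Nat.Primes, ((p : ℕ) : ℝ) ^ (-(3 / 2) : ℝ) := by
  have hM0 : 0 ≤ M := (norm_nonneg _).trans (hM 1 one_ne_zero)
  have hδ : 0 ≤ 2 / (betaSeq q N * Real.log q) :=
    div_nonneg zero_le_two (mul_nonneg (betaSeq_nonneg q N) (Real.log_natCast_nonneg q))
  set S := (Iic ⌊(q : ℝ) ^ betaSeq q N⌋₊).filter Nat.Prime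
  have hS : ∀ p ∈ S, p.Prime := fun p hp ↦ (mem_filter.1 hp).2
  have htail := sum_le_tsum_primes (f := fun p ↦ (p : ℝ) ^ (-(3 / 2) : ℝ)) hS
    (fun p ↦ by positivity) (Nat.Primes.summable_rpow.2 (by norm_num))
  have hterm : ∀ p ∈ S, primeWeight ‖smoothedCoeff q N h p‖ ‖squareCoeff q N h p‖ ≤
      ‖h p‖ ^ 2 * (p : ℝ) ^ (-(1 + 2 / (betaSeq q N * Real.log q))) +
        (M ^ 2 + (4 * M) ^ 3 * Real.exp (4 * M)) * (p : ℝ) ^ (-(3 / 2) : ℝ) := by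
    intro p hp
    have hpp := hS p hp
    have hpq : (p : ℝ) ≤ (q : ℝ) ^ betaSeq q N :=
      (Nat.le_floor_iff (by positivity)).1 (mem_Iic.1 (mem_filter.1 hp).1)
    refine primeWeight_le (mod_cast hpp.one_le) (norm_nonneg _) (norm_nonneg _) (norm_nonneg _)
      (hM p hpp.ne_zero) hδ ?_ ?_
    · rw [div_div_cancel_left' two_ne_zero, ← one_div]
      exact norm_smoothedCoeff_le h hpp.one_le hpq
    · refine (norm_squareCoeff_le (hM _ (pow_ne_zero 2 hpp.ne_zero))).trans ?_
      gcongr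
      linarith
  refine (sum_le_sum hterm).trans ?_
  rw [sum_add_distrib, ← mul_sum]
  gcongr

end SmoothedPrimeSums

section SmallBlocks

variable {q i N : ℕ}

/-- The degree `⌈40 β_i ^ (-3/4)⌉` at which the exponential of the `i`-th block is truncated; it is
at least twenty times the values `2 β_i ^ (-3/4)` that the sum over this block may take. -/
noncomputable def truncationDegree (q i : ℕ) : ℕ := ⌈40 * betaSeq q i ^ (-(3 / 4 : ℝ))⌉₊

lemma le_truncationDegree (q i : ℕ) : 40 * betaSeq q i ^ (-(3 / 4 : ℝ)) ≤ truncationDegree q i :=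
  Nat.le_ceil _

lemma one_le_betaSeq_rpow (hq : 0 < Real.log (Real.log q)) (hi : i ≠ 0) (hβ : betaSeq q i ≤ 1) :
    1 ≤ betaSeq q i ^ (-(3 / 4 : ℝ)) :=
  Real.one_le_rpow_of_pos_of_le_one_of_nonpos (betaSeq_pos hq hi) hβ (by norm_num)

lemma truncationDegree_ne_zero (hq : 0 < Real.log (Real.log q)) (hi : i ≠ 0) :
    truncationDegree q i ≠ 0 :=
  (Nat.ceil_pos.2 (mul_pos (by norm_num) (Real.rpow_pos_of_pos (betaSeq_pos hq hi) _))).ne'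

lemma betaSeq_mul_truncationDegree_le (hq : 0 < Real.log (Real.log q)) (hi : i ≠ 0)
    (hβ : betaSeq q i ≤ 1) :
    betaSeq q i * truncationDegree q i ≤ 41 * betaSeq q i ^ (1 / 4 : ℝ) := by
  have hpos := betaSeq_pos hq hi
  have hone := one_le_betaSeq_rpow hq hi hβ
  have hceil : (truncationDegree q i : ℝ) ≤ 41 * betaSeq q i ^ (-(3 / 4 : ℝ)) := by
    have := Nat.ceil_lt_add_one (a := 40 * betaSeq q i ^ (-(3 / 4 : ℝ))) (by positivity)
    rw [truncationDegree]
    linarith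
  calc betaSeq q i * truncationDegree q i
      ≤ betaSeq q i * (41 * betaSeq q i ^ (-(3 / 4 : ℝ))) := by gcongr
    _ = 41 * betaSeq q i ^ (1 / 4 : ℝ) := by
        rw [mul_left_comm, ← Real.rpow_one_add' hpos.le (by norm_num)]
        norm_num

lemma betaSeq_le_one (hβ : 400 * betaSeq q N ^ (1 / 4 : ℝ) < 1) (hi : i ≤ N) :
    betaSeq q i ≤ 1 := by
  refine (monotone_betaSeq q hi).trans ?_
  by_contra! h
  linarith [Real.one_lt_rpow h (by norm_num : (0 : ℝ) < 1 / 4)]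

lemma prod_rpow_pow_truncationDegree_sq_lt (hq : 0 < Real.log (Real.log q))
    (hβ : 400 * betaSeq q N ^ (1 / 4 : ℝ) < 1) :
    ∏ i ∈ Icc 1 N, (((q : ℝ) ^ (2 * betaSeq q i)) ^ truncationDegree q i) ^ 2 < q := by
  have hq1 : (1 : ℝ) < q := (by simp : (1 : ℝ) < Real.exp 1).trans (exp_one_lt_of_log_log_pos hq)
  have hq0 : (0 : ℝ) < q := by linarith
  have hexponent : ∑ i ∈ Icc 1 N, 4 * (betaSeq q i * truncationDegree q i) < 1 :=
    calc ∑ i ∈ Icc 1 N, 4 * (betaSeq q i * truncationDegree q i)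
        ≤ ∑ i ∈ Icc 1 N, 164 * betaSeq q i ^ (1 / 4 : ℝ) := sum_le_sum fun i hi ↦ by
          obtain ⟨hi1, hiN⟩ := mem_Icc.1 hi
          linarith [betaSeq_mul_truncationDegree_le hq (Nat.one_le_iff_ne_zero.1 hi1)
            (betaSeq_le_one hβ hiN)]
      _ = 164 * ∑ i ∈ Icc 1 N, betaSeq q i ^ (1 / 4 : ℝ) := (mul_sum _ _ _).symm
      _ < 1 := by linarith [sum_betaSeq_rpow_le q N, Real.rpow_nonneg (betaSeq_nonneg q N) (1 / 4)]
  calc ∏ i ∈ Icc 1 N, (((q : ℝ) ^ (2 * betaSeq q i)) ^ truncationDegree q i) ^ 2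
      = (q : ℝ) ^ ∑ i ∈ Icc 1 N, 4 * (betaSeq q i * truncationDegree q i) := by
        rw [Real.rpow_sum_of_pos hq0]
        refine prod_congr rfl fun i _ ↦ ?_
        rw [← Real.rpow_mul_natCast hq0.le, ← Real.rpow_mul_natCast hq0.le]
        push_cast
        ring_nf
    _ < (q : ℝ) ^ (1 : ℝ) := Real.rpow_lt_rpow_of_exponent_lt hq1 hexponent
    _ = q := Real.rpow_one _

lemma exp_neg_truncationDegree_le (hq : 0 < Real.log (Real.log q)) (hi : i ≠ 0)
    (hβ : betaSeq q i ≤ 1) : Real.exp (-truncationDegree q i) ≤ betaSeq q i ^ (1 / 4 : ℝ) := by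
  have hpos := betaSeq_pos hq hi
  have hrpow : 0 < betaSeq q i ^ (-(3 / 4 : ℝ)) := by positivity
  calc Real.exp (-truncationDegree q i) ≤ (betaSeq q i ^ (-(3 / 4 : ℝ)))⁻¹ := by
        rw [Real.exp_neg]
        gcongr
        linarith [le_truncationDegree q i, Real.add_one_le_exp (truncationDegree q i : ℝ)]
    _ = betaSeq q i ^ (3 / 4 : ℝ) := by rw [Real.rpow_neg hpos.le, inv_inv]
    _ ≤ betaSeq q i ^ (1 / 4 : ℝ) :=
        Real.rpow_le_rpow_of_exponent_ge hpos hβ (by norm_num)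

lemma prod_one_add_exp_neg_truncationDegree_sq_le (hq : 0 < Real.log (Real.log q))
    (hβ : 400 * betaSeq q N ^ (1 / 4 : ℝ) < 1) :
    (∏ i ∈ Icc 1 N, (1 + Real.exp (-truncationDegree q i))) ^ 2 ≤ Real.exp 1 := by
  have hfactor : ∀ i ∈ Icc 1 N,
      1 + Real.exp (-truncationDegree q i) ≤ Real.exp (betaSeq q i ^ (1 / 4 : ℝ)) := by
    intro i hi
    obtain ⟨hi1, hiN⟩ := mem_Icc.1 hi
    linarith [Real.add_one_le_exp (betaSeq q i ^ (1 / 4 : ℝ)),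
      exp_neg_truncationDegree_le hq (Nat.one_le_iff_ne_zero.1 hi1) (betaSeq_le_one hβ hiN)]
  calc (∏ i ∈ Icc 1 N, (1 + Real.exp (-truncationDegree q i))) ^ 2
      ≤ (∏ i ∈ Icc 1 N, Real.exp (betaSeq q i ^ (1 / 4 : ℝ))) ^ 2 := by
        gcongr with i hi
        exact hfactor i hi
    _ = Real.exp (2 * ∑ i ∈ Icc 1 N, betaSeq q i ^ (1 / 4 : ℝ)) := by
        rw [← Real.exp_sum, ← Real.exp_nat_mul]
        norm_num
    _ ≤ Real.exp 1 := by
        gcongr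
        linarith [sum_betaSeq_rpow_le q N, Real.rpow_nonneg (betaSeq_nonneg q N) (1 / 4)]

variable [NeZero q] {h : ℕ → ℂ}

theorem sum_exp_two_mul_reLogPolynomial_le {M : ℝ} (hM : ∀ n ≠ 0, ‖h n‖ ≤ M)
    (hq : 0 < Real.log (Real.log q)) (hβ : 400 * betaSeq q N ^ (1 / 4 : ℝ) < 1)
    (hblock : ∀ i ∈ Icc 1 N,
      M / 2 * ∑ p ∈ primeBlock q i, 1 / (p : ℝ) ≤ betaSeq q i ^ (-(3 / 4 : ℝ)))
    {T : Finset (DirichletCharacter ℂ q)}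
    (hT : ∀ χ ∈ T, ∀ i ∈ Icc 1 N, |(Gfun q h i N χ).re| ≤ betaSeq q i ^ (-(3 / 4 : ℝ))) :
    ∑ χ ∈ T, Real.exp (2 * reLogPolynomial q N h χ) ≤
      Real.exp 1 * (q.totient * Real.exp (∑ p ∈ (Iic ⌊(q : ℝ) ^ betaSeq q N⌋₊).filter Nat.Prime,
        primeWeight ‖smoothedCoeff q N h p‖ ‖squareCoeff q N h p‖)) := by
  have hq1 : 1 ≤ q := NeZero.one_le
  have hblockSum : ∀ χ ∈ T, ∀ i ∈ Icc 1 N,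
      |rePrimeSum (smoothedCoeff q N h) (squareCoeff q N h) (primeBlock q i) χ| ≤
        truncationDegree q i / 20 := fun χ hχ i hi ↦ by
    linarith [abs_rePrimeSum_primeBlock_le (N := N) hM i χ, hT χ hχ i hi, hblock i hi,
      le_truncationDegree q i]
  have hlength : ∀ i ∈ Icc 1 N, ∀ p ∈ primeBlock q i,
      (p : ℝ) ^ 2 ≤ (q : ℝ) ^ (2 * betaSeq q i) := fun i _ p hp ↦ by
    rw [mul_comm, Real.rpow_mul q.cast_nonneg, Real.rpow_two]
    exact pow_le_pow_left₀ p.cast_nonneg (mem_primeBlock.1 hp).2.2 2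
  have hmoment := sum_exp_two_mul_rePrimeSum_le (smoothedCoeff q N h) (squareCoeff q N h)
    (fun i _ p hp ↦ (mem_primeBlock.1 hp).1) ((pairwise_disjoint_primeBlock hq1).set_pairwise _)
    (fun i _ ↦ Real.one_le_rpow (mod_cast hq1) (mul_nonneg zero_le_two (betaSeq_nonneg q i)))
    hlength (fun i hi ↦ truncationDegree_ne_zero hq (Nat.one_le_iff_ne_zero.1 (mem_Icc.1 hi).1))
    (prod_rpow_pow_truncationDegree_sq_lt hq hβ) hblockSum
  simp_rw [biUnion_primeBlock hq1, rePrimeSum_smoothedCoeff_squareCoeff hq1] at hmoment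
  refine hmoment.trans ?_
  gcongr
  exact prod_one_add_exp_neg_truncationDegree_sq_le hq hβ

end SmallBlocks

section LargeModulus

lemma twenty_mul_exp_neg_le {a A : ℝ} (ha : 1 ≤ a) (hA : 0 ≤ A) :
    20 * Real.exp (-(10000 * a ^ 2 * (A + 1))) ≤ Real.exp (-(8000 * a ^ 2)) := by
  have h20 : (20 : ℝ) ≤ Real.exp (2000 * a ^ 2) := by
    nlinarith [Real.add_one_le_exp (2000 * a ^ 2)]
  calc 20 * Real.exp (-(10000 * a ^ 2 * (A + 1)))
      ≤ Real.exp (2000 * a ^ 2) * Real.exp (-(10000 * a ^ 2 * 1)) := by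
        gcongr
        linarith
    _ = Real.exp (-(8000 * a ^ 2)) := by
        rw [← Real.exp_add]
        ring_nf

lemma mul_le_rpow_of_le_exp_neg {a x : ℝ} (ha : 1 ≤ a) (hx : 0 < x)
    (hxa : x ≤ Real.exp (-(8000 * a ^ 2))) : 10 * a ≤ x ^ (-(3 / 4 : ℝ)) := by
  have hexp := Real.add_one_le_exp (-(8000 * a ^ 2) * -(3 / 4))
  rw [Real.exp_mul] at hexp
  nlinarith [Real.rpow_le_rpow_of_nonpos hx hxa (by norm_num : -(3 / 4 : ℝ) ≤ 0)]

lemma mul_rpow_lt_one_of_le_exp_neg {a x : ℝ} (ha : 1 ≤ a) (hx : 0 ≤ x)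
    (hxa : x ≤ Real.exp (-(8000 * a ^ 2))) : 400 * x ^ (1 / 4 : ℝ) < 1 := by
  have hexp : 400 < Real.exp (2000 * a ^ 2) := by
    nlinarith [Real.add_one_le_exp (2000 * a ^ 2)]
  calc 400 * x ^ (1 / 4 : ℝ) ≤ 400 * Real.exp (-(8000 * a ^ 2)) ^ (1 / 4 : ℝ) := by gcongr
    _ = 400 / Real.exp (2000 * a ^ 2) := by
        rw [← Real.exp_mul, div_eq_mul_inv 400, ← Real.exp_neg]
        ring_nf
    _ < 1 := (div_lt_one (Real.exp_pos _)).2 hexp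

lemma tendsto_log_log_natCast :
    Filter.Tendsto (fun q : ℕ ↦ Real.log (Real.log q)) Filter.atTop Filter.atTop :=
  Real.tendsto_log_atTop.comp (Real.tendsto_log_atTop.comp tendsto_natCast_atTop_atTop)

lemma eventually_mul_add_le_rpow {M C : ℝ} (hM : 0 ≤ M) (hC : 0 ≤ C) :
    ∀ᶠ x : ℝ in Filter.atTop, M * (3 * x + C) ≤ x ^ (3 / 2 : ℝ) := by
  filter_upwards [Filter.eventually_ge_atTop 1,
    (tendsto_rpow_atTop (by norm_num : (0 : ℝ) < 1 / 2)).eventually_ge_atTop (M * (3 + C))]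
    with x hx hx'
  calc M * (3 * x + C) ≤ M * (3 + C) * x := by nlinarith [mul_nonneg hM hC]
    _ ≤ x ^ (1 / 2 : ℝ) * x := by gcongr
    _ = x ^ (3 / 2 : ℝ) := by
        rw [← Real.rpow_add_one (by linarith)]
        norm_num

lemma eventually_largeModulus {M C ε : ℝ} (hM : 0 ≤ M) (hC : 0 ≤ C) (hε : 0 < ε) :
    ∀ᶠ q : ℕ in Filter.atTop, 0 < Real.log (Real.log q) ∧ 1 / Real.log (Real.log q) ^ 2 ≤ ε ∧
      M * (3 * Real.log (Real.log q) + C) ≤ Real.log (Real.log q) ^ (3 / 2 : ℝ) ∧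
      2 / ε ≤ Real.log q := by
  have hinv : ∀ᶠ x : ℝ in Filter.atTop, 1 / x ^ 2 ≤ ε := by
    simp_rw [one_div]
    exact (tendsto_inv_atTop_zero.comp (Filter.tendsto_pow_atTop two_ne_zero)).eventually_le_const
      hε
  exact (tendsto_log_log_natCast.eventually_gt_atTop 0).and <|
    (tendsto_log_log_natCast.eventually hinv).and <|
    (tendsto_log_log_natCast.eventually (eventually_mul_add_le_rpow hM hC)).and <|
    (Real.tendsto_log_atTop.comp tendsto_natCast_atTop_atTop).eventually_ge_atTop _

end LargeModulus

section TwistedMoment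

variable {ι : Type*} [Fintype ι] {a : ι → ℝ} {A : ℝ} {q : ℕ}

lemma norm_shiftCoeff_le (ha : ∀ j, 0 ≤ a j) (t : ι → ℝ) {n : ℕ} (hn : n ≠ 0) :
    ‖shiftCoeff a t n‖ ≤ (∑ j, a j) / 2 := by
  have hsum : ‖∑ j, (a j : ℂ) * (n : ℂ) ^ (-(t j) * I)‖ ≤ ∑ j, a j := by
    refine norm_sum_le_of_le _ fun j _ ↦ ?_
    rw [norm_mul, norm_real, norm_natCast_cpow_of_pos (Nat.pos_of_ne_zero hn),
      Real.norm_of_nonneg (ha j)]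
    simp
  rw [shiftCoeff, norm_mul, norm_div, norm_one, Complex.norm_ofNat]
  linarith

lemma exists_exp_sum_primeWeight_shiftCoeff_le [LinearOrder ι] (hRH : RiemannHypothesis)
    (ha : ∀ j, 0 ≤ a j) : ∃ C : ℝ, 0 < C ∧ ∀ (q N : ℕ) (t : ι → ℝ), 0 < Real.log q →
      0 < betaSeq q N → betaSeq q N ≤ 1 → 2 / betaSeq q N ≤ Real.log q →
        Real.exp (∑ p ∈ (Iic ⌊(q : ℝ) ^ betaSeq q N⌋₊).filter Nat.Prime,
          primeWeight ‖smoothedCoeff q N (shiftCoeff a t) p‖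
            ‖squareCoeff q N (shiftCoeff a t) p‖) ≤ C * shiftProduct q a t := by
  obtain ⟨C, hC, hmain⟩ := exists_exp_sum_normSq_shiftCoeff_le hRH ha
  set M := (∑ j, a j) / 2
  set E := Real.exp ((M ^ 2 + (4 * M) ^ 3 * Real.exp (4 * M)) *
    ∑' p : Nat.Primes, ((p : ℕ) : ℝ) ^ (-(3 / 2) : ℝ))
  refine ⟨C * E, by positivity, fun q N t hq hβ hβ1 hβq ↦ ?_⟩
  have hδ : 1 / Real.log q ≤ 2 / (betaSeq q N * Real.log q) := by
    rw [div_le_div_iff₀ hq (by positivity)]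
    nlinarith
  have hδ1 : 2 / (betaSeq q N * Real.log q) ≤ 1 := by
    rwa [← div_div, div_le_one hq]
  refine (Real.exp_le_exp.2 (sum_primeWeight_smoothedCoeff_squareCoeff_le
    fun n hn ↦ norm_shiftCoeff_le ha t hn)).trans ?_
  rw [Real.exp_add, mul_right_comm]
  gcongr
  exact hmain q t _ hq hδ hδ1 _ fun p hp ↦ (mem_filter.1 hp).2

theorem stmt12_general [LinearOrder ι] (ha : ∀ j, 0 ≤ a j) (hA : 0 ≤ A) :
    ∃ C : ℝ, 0 < C ∧ ∃ q₀ : ℕ, ∀ (q : ℕ) [NeZero q], q₀ ≤ q →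
      dirichletRH (1 : DirichletCharacter ℂ q) → ∀ (t : ι → ℝ) (N : ℕ),
      N = bigI q ((∑ j, a j) + 10) A → ∀ T : Finset (DirichletCharacter ℂ q),
      (∀ χ ∈ T, ∀ i, 1 ≤ i → i ≤ N →
        |(Gfun q (shiftCoeff a t) i N χ).re| ≤ betaSeq q i ^ (-(3 / 4 : ℝ))) →
      ∑ χ ∈ T, Real.exp (2 * reLogPolynomial q N (shiftCoeff a t) χ) ≤
        C * q.totient * shiftProduct q a t := by
  by_cases hRH : RiemannHypothesis
  swap
  · exact ⟨1, one_pos, 0, fun q _ _ hq ↦ absurd (riemannHypothesis_of_dirichletRH_one hq) hRH⟩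
  obtain ⟨C₁, hC₁, hweight⟩ := exists_exp_sum_primeWeight_shiftCoeff_le hRH ha
  obtain ⟨C₂, hC₂, hmertens⟩ := exists_sum_one_div_prime_le
  have hsum : 0 ≤ ∑ j, a j := sum_nonneg fun j _ ↦ ha j
  set b := (∑ j, a j) + 10
  have hb1 : 1 ≤ b := by linarith
  obtain ⟨q₀, hq₀⟩ := Filter.eventually_atTop.1 (eventually_largeModulus
    (by positivity : 0 ≤ (∑ j, a j) / 2 / 2) hC₂
    (Real.exp_pos (-(10000 * b ^ 2 * (A + 1)))))
  refine ⟨Real.exp 1 * C₁, by positivity, q₀, fun q _ hqq₀ _ t N hN T hT ↦ ?_⟩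
  obtain ⟨hq, hβ₁, hmertens_q, hlog⟩ := hq₀ q hqq₀
  have hlt := hN ▸ lt_betaSeq_bigI hq b A
  have hsmall : ∀ i ≤ N, betaSeq q i ≤ Real.exp (-(8000 * b ^ 2)) := fun i hi ↦
    (monotone_betaSeq q hi).trans
      ((hN ▸ betaSeq_bigI_le hq hβ₁).trans (twenty_mul_exp_neg_le hb1 hA))
  have hpos : 0 < betaSeq q N := (Real.exp_pos _).trans hlt
  have hroot := mul_rpow_lt_one_of_le_exp_neg hb1 hpos.le (hsmall N le_rfl)
  have hblock : ∀ i ∈ Icc 1 N, (∑ j, a j) / 2 / 2 * ∑ p ∈ primeBlock q i, 1 / (p : ℝ) ≤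
      betaSeq q i ^ (-(3 / 4 : ℝ)) := fun i hi ↦ by
    obtain ⟨hi1, hiN⟩ := mem_Icc.1 hi
    have hrpow := mul_le_rpow_of_le_exp_neg hb1 (betaSeq_pos hq (Nat.one_le_iff_ne_zero.1 hi1))
      (hsmall i hiN)
    exact mul_sum_primeBlock_one_div_le hmertens hq (by positivity) hmertens_q
      (betaSeq_le_one hroot hiN) (by linarith) hi1
  have hlogN : 2 / betaSeq q N ≤ Real.log q := le_trans (by gcongr) hlog
  have hlogq : 0 < Real.log q := lt_of_lt_of_le (by positivity) hlogN
  calc ∑ χ ∈ T, Real.exp (2 * reLogPolynomial q N (shiftCoeff a t) χ)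
      ≤ Real.exp 1 * (q.totient * (C₁ * shiftProduct q a t)) :=
        (sum_exp_two_mul_reLogPolynomial_le (fun n hn ↦ norm_shiftCoeff_le ha t hn) hq hroot hblock
          fun χ hχ i hi ↦ hT χ hχ i (mem_Icc.1 hi).1 (mem_Icc.1 hi).2).trans <| by
          gcongr
          exact hweight q N t hlogq hpos (betaSeq_le_one hroot le_rfl) hlogN
    _ = Real.exp 1 * C₁ * q.totient * shiftProduct q a t := by ring

end TwistedMoment

open Classical in
theorem stmt12 (k : ℕ) (hk : 0 < k) (a : Fin (2 * k) → ℝ) (A : ℝ)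
    (ha : ∀ j, 0 < a j) (hA : 0 < A) :
    ∃ C : ℝ, 0 < C ∧ ∃ q0 : ℕ, ∀ (q : ℕ) [NeZero q], q0 ≤ q →
      (∀ χ : DirichletCharacter ℂ q, dirichletRH χ) →
      ∀ t : Fin (2 * k) → ℝ, (∀ j, |t j| ≤ (q : ℝ) ^ A) →
      ∀ h : ℕ → ℂ,
        (h = fun n : ℕ => (1 / 2) * ∑ j, (a j : ℂ) * (n : ℂ) ^ (-(t j) * Complex.I)) →
      ∀ NI : ℕ, NI = bigI q ((∑ j, a j) + 10) A →
      ∑ χ ∈ Finset.univ.filter (fun χ : DirichletCharacter ℂ q =>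
            χ.IsPrimitive ∧ ∀ i, 1 ≤ i → i ≤ NI →
              |(Gfun q h i NI χ).re| ≤ betaSeq q i ^ (-(3 / 4 : ℝ))),
        Real.exp (2 *
          ((∑ p ∈ Finset.filter Nat.Prime (Finset.Iic ⌊(q : ℝ) ^ betaSeq q NI⌋₊),
              χ p * h p /
                (p : ℂ) ^ (((1 / 2 + 1 / (betaSeq q NI * Real.log q) : ℝ) : ℂ)) *
                ((Real.log ((q : ℝ) ^ betaSeq q NI / p) /
                    Real.log ((q : ℝ) ^ betaSeq q NI) : ℝ) : ℂ)).re
           + (1 / 2) *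
            (∑ p ∈ Finset.filter Nat.Prime (Finset.Iic ⌊(q : ℝ) ^ (betaSeq q NI / 2)⌋₊),
                χ ((p : ZMod q) ^ 2) * h (p ^ 2) / (p : ℂ)).re))
      ≤ C * (Nat.totient q) * Real.log q ^ ((∑ j, (a j) ^ 2) / 4) *
        ∏ i, ∏ j, if i < j then gfun q |t i - t j| ^ (a i * a j / 2) else 1 := by
  obtain ⟨C, hC, q₀, hbound⟩ := stmt12_general (fun j ↦ (ha j).le) hA.le
  refine ⟨C, hC, q₀, fun q _ hq hRH t _ h hh N hN ↦ ?_⟩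
  subst hh
  refine (hbound q hq (hRH 1) t N hN _ fun χ hχ ↦ ?_).trans_eq (mul_assoc _ _ _).symm
  exact ((@mem_filter _ _ (_) _ _).1 hχ).2.2
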